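/- arXiv:1201.4075 — 3 statements merged into one kernel-verified Lean document; each statement's English description precedes it below -/
import Mathlib

section
/- Let v, w ∈ ℂ with either v = w or Re(v) ≠ Re(w), and let K := [v,w] be the closed line segment joining v and w (so K is a singleton or a non-vertical line segment). Then no function f ∈ Exp(K) is frequently hypercyclic for T₁ on H(ℂ). -/
open Filter Complex

/-- Support function `H_K(z) = sup { Re (z·u) : u ∈ K }` of a set `K ⊆ ℂ`. -/
noncomputable def suppFn (K : Set ℂ) (z : ℂ) : ℝ :=
  sSup ((fun u => (z * u).re) '' K)

/-- The norm `‖f‖_{K,n} = sup_z |f z| · exp (−H_K z − |z|/n)`. -/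
noncomputable def expNorm (K : Set ℂ) (n : ℕ) (f : ℂ → ℂ) : ℝ :=
  sSup (Set.range fun z : ℂ => ‖f z‖ * Real.exp (-(suppFn K z) - ‖z‖ / n))

/-- Membership in `Exp(K)`: `f` is entire and all the norms `‖f‖_{K,n}` are finite. -/
def MemExp (K : Set ℂ) (f : ℂ → ℂ) : Prop :=
  Differentiable ℂ f ∧ ∀ n : ℕ, 0 < n →
    BddAbove (Set.range fun z : ℂ => ‖f z‖ * Real.exp (-(suppFn K z) - ‖z‖ / n))

open scoped Classical in
/-- Lower density of a set of natural numbers. -/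
noncomputable def lowerDensity (A : Set ℕ) : ℝ :=
  liminf (fun N : ℕ =>
    (((Finset.range (N + 1)).filter (fun n => n ∈ A)).card : ℝ) / N) atTop

/-- Lower density of a discrete subset of `ℂ`. -/
noncomputable def ldensC (Λ : Set ℂ) : ℝ :=
  liminf (fun r : ℝ => (Nat.card {z : ℂ // z ∈ Λ ∧ ‖z‖ ≤ r} : ℝ) / r) atTop

/-- `f` is hypercyclic for the translation `T₁` on `Exp(K)`. -/
def HCExp (K : Set ℂ) (f : ℂ → ℂ) : Prop :=
  MemExp K f ∧ ∀ g : ℂ → ℂ, MemExp K g → ∀ n : ℕ, 0 < n → ∀ ε > (0 : ℝ),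
    ∃ k : ℕ, expNorm K n (fun z => f (z + (k : ℂ)) - g z) < ε

/-- `f` is frequently hypercyclic for the translation `T₁` on `Exp(K)`. -/
def FHCExp (K : Set ℂ) (f : ℂ → ℂ) : Prop :=
  MemExp K f ∧ ∀ g : ℂ → ℂ, MemExp K g → ∀ n : ℕ, 0 < n → ∀ ε > (0 : ℝ),
    0 < lowerDensity {k : ℕ | expNorm K n (fun z => f (z + (k : ℂ)) - g z) < ε}

/-- `f` is hypercyclic (Birkhoff-universal) for `T₁` on `H(ℂ)`. -/
def HCEnt (f : ℂ → ℂ) : Prop :=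
  Differentiable ℂ f ∧ ∀ g : ℂ → ℂ, Differentiable ℂ g → ∀ R > (0 : ℝ), ∀ ε > (0 : ℝ),
    ∃ k : ℕ, ∀ z : ℂ, ‖z‖ ≤ R → ‖f (z + (k : ℂ)) - g z‖ < ε

/-- `f` is frequently hypercyclic (frequently Birkhoff-universal) for `T₁` on `H(ℂ)`. -/
def FHCEnt (f : ℂ → ℂ) : Prop :=
  Differentiable ℂ f ∧ ∀ g : ℂ → ℂ, Differentiable ℂ g → ∀ R > (0 : ℝ), ∀ ε > (0 : ℝ),
    0 < lowerDensity {k : ℕ | ∀ z : ℂ, ‖z‖ ≤ R → ‖f (z + (k : ℂ)) - g z‖ < ε}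

/-- `f` is an entire function of (finite) exponential type. -/
def ExpType (f : ℂ → ℂ) : Prop :=
  Differentiable ℂ f ∧ ∃ C τ : ℝ, ∀ z : ℂ, ‖f z‖ ≤ C * Real.exp (τ * ‖z‖)

/-- The indicator function `h_f(θ) = limsup_{r→∞} log |f(r e^{iθ})| / r`. -/
noncomputable def indicatorFn (f : ℂ → ℂ) (θ : ℝ) : ℝ :=
  limsup (fun r : ℝ => Real.log ‖f ((r : ℂ) * Complex.exp (θ * Complex.I))‖ / r) atTop

/-! On the half-plane `0 ≤ Re (z (w - v))` the support function of `[v, w]` is `Re (z w)`, so there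
`f z * exp (-z w)` has exponential type zero. If `f` were frequently hypercyclic, its translates
would approximate `z - 1` along a set of positive lower density, which forces `f` to have zeros near
the points `k + 1` for `k` in that set; they lie in this half-plane because `0 < Re (w - v)`.

A rotation turns it into the right half-plane and `f` into a function `F` of type zero. At a fixed
point, the zeros of modulus at most `R` improve the maximum principle on the half-disc of radius
`4 R`, through their Blaschke factors, by a factor `exp (-κ log R)` with `κ > 0`. Type zero costs
only `exp (ε log R)` with `ε` arbitrarily small, because `‖z‖` has a harmonic majorant on the
half-disc which is `O (log R)` at a fixed point. Hence `F = 0`, whereas the translates of `f` also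
approximate the constant `1`. -/

open Metric Topology ComplexConjugate

section HalfDisc

/-- The half-disc `{z | 0 < Re z, ‖z‖ < R}`, on which the maximum principle is applied. -/
def halfDisc (R : ℝ) : Set ℂ := {z | 0 < z.re} ∩ ball 0 R

/-- The Blaschke factor of `halfDisc R` with zero `a`: its other zero `-R² / a` and its poles
`-conj a` and `R² / conj a` are the reflections of `a` that make its modulus `1` on the boundary. -/
noncomputable def halfDiscBlaschke (R : ℝ) (a z : ℂ) : ℂ :=
  (z - a) * (R ^ 2 + a * z) / ((z + conj a) * (R ^ 2 - conj a * z))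

variable {R M : ℝ} {a z : ℂ} {F : ℂ → ℂ}

lemma isOpen_halfDisc (R : ℝ) : IsOpen (halfDisc R) :=
  (isOpen_lt continuous_const continuous_re).inter isOpen_ball

lemma isBounded_halfDisc (R : ℝ) : Bornology.IsBounded (halfDisc R) :=
  isBounded_ball.subset Set.inter_subset_right

lemma re_nonneg_and_norm_le_of_mem_closure_halfDisc (hz : z ∈ closure (halfDisc R)) :
    0 ≤ z.re ∧ ‖z‖ ≤ R := by
  have hsub : closure (halfDisc R) ⊆ {z | 0 ≤ z.re} ∩ closedBall 0 R :=
    closure_minimal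
      (Set.inter_subset_inter (Set.ofPred_subset_ofPred.2 fun _ => le_of_lt) ball_subset_closedBall)
      ((isClosed_le continuous_const continuous_re).inter isClosed_closedBall)
  simpa using hsub hz

lemma re_eq_zero_or_norm_eq_of_mem_frontier_halfDisc (hz : z ∈ frontier (halfDisc R)) :
    z.re = 0 ∨ ‖z‖ = R := by
  rw [(isOpen_halfDisc R).frontier_eq] at hz
  obtain ⟨hre, hnorm⟩ := re_nonneg_and_norm_le_of_mem_closure_halfDisc hz.1
  by_contra! h
  exact hz.2 ⟨hre.lt_of_ne' h.1, mem_ball_zero_iff.2 (hnorm.lt_of_ne h.2)⟩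

lemma add_conj_ne_zero (ha : 0 < a.re) (hz : 0 ≤ z.re) : z + conj a ≠ 0 := by
  intro h
  have := congrArg re h
  simp only [add_re, conj_re, zero_re] at this
  linarith

lemma sq_add_mul_ne_zero (ha : ‖a‖ < R) (hz : ‖z‖ ≤ R) : (R ^ 2 + a * z : ℂ) ≠ 0 := by
  intro h
  have hlt : ‖a * z‖ < R ^ 2 := by
    rw [norm_mul]
    nlinarith [norm_nonneg a, norm_nonneg z]
  rw [eq_neg_of_add_eq_zero_right h, norm_neg, norm_pow, Complex.norm_real, Real.norm_eq_abs,
    sq_abs] at hlt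
  exact lt_irrefl _ hlt

lemma sq_sub_conj_mul_ne_zero (ha : ‖a‖ < R) (hz : ‖z‖ ≤ R) :
    (R ^ 2 - conj a * z : ℂ) ≠ 0 := by
  simpa [sub_eq_add_neg] using sq_add_mul_ne_zero (a := -conj a) (by simpa using ha) hz

lemma halfDiscBlaschke_ne_zero (ha : a ∈ halfDisc R) (hz : z ∈ closure (halfDisc R))
    (hza : z ≠ a) : halfDiscBlaschke R a z ≠ 0 := by
  have haR : ‖a‖ < R := mem_ball_zero_iff.1 ha.2
  obtain ⟨hre, hnorm⟩ := re_nonneg_and_norm_le_of_mem_closure_halfDisc hz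
  exact div_ne_zero (mul_ne_zero (sub_ne_zero.2 hza) (sq_add_mul_ne_zero haR hnorm))
    (mul_ne_zero (add_conj_ne_zero ha.1 hre) (sq_sub_conj_mul_ne_zero haR hnorm))

lemma sq_norm_sub (a z : ℂ) : ‖z - a‖ ^ 2 = ‖z + conj a‖ ^ 2 - 4 * (z.re * a.re) := by
  simp only [Complex.sq_norm, normSq_apply, sub_re, sub_im, add_re, add_im, conj_re, conj_im]
  ring

lemma sq_norm_sq_add_mul (R : ℝ) (a z : ℂ) :
    ‖(R ^ 2 + a * z : ℂ)‖ ^ 2 = ‖(R ^ 2 - conj a * z : ℂ)‖ ^ 2 + 4 * R ^ 2 * (z.re * a.re) := by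
  simp only [← ofReal_pow, Complex.sq_norm, normSq_apply, sub_re, sub_im, add_re, add_im, mul_re,
    mul_im, conj_re, conj_im, ofReal_re, ofReal_im]
  ring

lemma norm_halfDiscBlaschke_eq_one_of_mem_frontier (ha : a ∈ halfDisc R)
    (hz : z ∈ frontier (halfDisc R)) : ‖halfDiscBlaschke R a z‖ = 1 := by
  obtain ⟨hre, hnorm⟩ := re_nonneg_and_norm_le_of_mem_closure_halfDisc (frontier_subset_closure hz)
  have hnum : ‖z - a‖ * ‖(R ^ 2 + a * z : ℂ)‖ = ‖z + conj a‖ * ‖(R ^ 2 - conj a * z : ℂ)‖ := by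
    rcases re_eq_zero_or_norm_eq_of_mem_frontier_halfDisc hz with h | h
    · have h₁ : ‖z - a‖ = ‖z + conj a‖ := by
        simpa [h] using sq_norm_sub a z
      have h₂ : ‖(R ^ 2 + a * z : ℂ)‖ = ‖(R ^ 2 - conj a * z : ℂ)‖ := by
        simpa [h] using sq_norm_sq_add_mul R a z
      rw [h₁, h₂]
    · have hR : (R ^ 2 : ℂ) = z * conj z := by
        rw [mul_conj, normSq_eq_norm_sq, h, ofReal_pow]
      have h₁ : ‖(R ^ 2 + a * z : ℂ)‖ = R * ‖z + conj a‖ := by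
        rw [hR, mul_comm a, ← mul_add, norm_mul, h, ← RCLike.norm_conj (z + conj a), map_add,
          conj_conj]
      have h₂ : ‖(R ^ 2 - conj a * z : ℂ)‖ = R * ‖z - a‖ := by
        rw [hR, mul_comm (conj a), ← mul_sub, norm_mul, h, ← map_sub, RCLike.norm_conj]
      rw [h₁, h₂]
      ring
  rw [halfDiscBlaschke, norm_div, norm_mul, norm_mul, hnum, ← norm_mul]
  exact div_self (norm_ne_zero_iff.2 (mul_ne_zero (add_conj_ne_zero ha.1 hre)
    (sq_sub_conj_mul_ne_zero (mem_ball_zero_iff.1 ha.2) hnorm)))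

lemma exists_eq_halfDiscBlaschke_mul (hF : DiffContOnCl ℂ F (halfDisc R))
    (ha : a ∈ halfDisc R) (hFa : F a = 0) :
    ∃ G, DiffContOnCl ℂ G (halfDisc R) ∧
      ∀ z ∈ closure (halfDisc R), F z = halfDiscBlaschke R a z * G z := by
  have haR : ‖a‖ < R := mem_ball_zero_iff.1 ha.2
  have hnhds : halfDisc R ∈ 𝓝 a := (isOpen_halfDisc R).mem_nhds ha
  have hslope : DiffContOnCl ℂ (dslope F a) (halfDisc R) :=
    ⟨(differentiableOn_dslope hnhds).2 hF.differentiableOn,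
      (continuousOn_dslope (mem_of_superset hnhds subset_closure)).2
        ⟨hF.continuousOn, hF.differentiableAt' hnhds⟩⟩
  have hcofactor : DiffContOnCl ℂ
      (fun z => (z + conj a) * (R ^ 2 - conj a * z) / (R ^ 2 + a * z)) (halfDisc R) := by
    refine DifferentiableOn.diffContOnCl fun z hz => DifferentiableAt.differentiableWithinAt ?_
    have hz' := sq_add_mul_ne_zero haR (re_nonneg_and_norm_le_of_mem_closure_halfDisc hz).2
    fun_prop (disch := assumption)
  refine ⟨_, hslope.smul hcofactor, fun z hz => ?_⟩
  obtain ⟨hre, hnorm⟩ := re_nonneg_and_norm_le_of_mem_closure_halfDisc hz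
  have h₁ := add_conj_ne_zero ha.1 hre
  have h₂ := sq_add_mul_ne_zero haR hnorm
  have h₃ := sq_sub_conj_mul_ne_zero haR hnorm
  have hFz : (z - a) * dslope F a z = F z := by
    simpa [hFa] using sub_smul_dslope F a z
  rw [← hFz, halfDiscBlaschke, smul_eq_mul]
  generalize (z + conj a : ℂ) = p at *
  generalize (R ^ 2 + a * z : ℂ) = q at *
  generalize (R ^ 2 - conj a * z : ℂ) = r at *
  field_simp

theorem norm_le_mul_prod_halfDiscBlaschke {S : Finset ℂ} (hF : DiffContOnCl ℂ F (halfDisc R))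
    (hM : ∀ z ∈ frontier (halfDisc R), ‖F z‖ ≤ M) (hS : ∀ a ∈ S, a ∈ halfDisc R ∧ F a = 0)
    (hz : z ∈ closure (halfDisc R)) :
    ‖F z‖ ≤ M * ∏ a ∈ S, ‖halfDiscBlaschke R a z‖ := by
  classical
  induction S using Finset.induction_on generalizing F with
  | empty =>
    simpa using norm_le_of_forall_mem_frontier_norm_le (isBounded_halfDisc R) hF hM hz
  | insert a S haS ih =>
    rw [Finset.forall_mem_insert] at hS
    obtain ⟨⟨ha, hFa⟩, hS⟩ := hS
    obtain ⟨G, hG, hFG⟩ := exists_eq_halfDiscBlaschke_mul hF ha hFa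
    have hGM : ∀ z ∈ frontier (halfDisc R), ‖G z‖ ≤ M := fun z hz => by
      simpa [hFG z (frontier_subset_closure hz),
        norm_halfDiscBlaschke_eq_one_of_mem_frontier ha hz] using hM z hz
    have hGS : ∀ b ∈ S, b ∈ halfDisc R ∧ G b = 0 := fun b hb => by
      obtain ⟨hbR, hFb⟩ := hS b hb
      have hba : b ≠ a := ne_of_mem_of_not_mem hb haS
      rw [hFG b (subset_closure hbR)] at hFb
      exact ⟨hbR, (mul_eq_zero.1 hFb).resolve_left
        (halfDiscBlaschke_ne_zero ha (subset_closure hbR) hba)⟩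
    calc ‖F z‖ = ‖halfDiscBlaschke R a z‖ * ‖G z‖ := by rw [hFG z hz, norm_mul]
      _ ≤ ‖halfDiscBlaschke R a z‖ * (M * ∏ b ∈ S, ‖halfDiscBlaschke R b z‖) := by
        gcongr; exact ih hG hGM hGS
      _ = M * ∏ b ∈ insert a S, ‖halfDiscBlaschke R b z‖ := by
        rw [Finset.prod_insert haS, mul_left_comm]

lemma sq_norm_halfDiscBlaschke (h₁ : z + conj a ≠ 0) (h₂ : (R ^ 2 - conj a * z : ℂ) ≠ 0) :
    ‖halfDiscBlaschke R a z‖ ^ 2 = (1 + -(4 * (z.re * a.re) / ‖z + conj a‖ ^ 2)) *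
      (1 + 4 * R ^ 2 / ‖(R ^ 2 - conj a * z : ℂ)‖ ^ 2 * (z.re * a.re)) := by
  have h₁' := norm_ne_zero_iff.2 h₁
  have h₂' := norm_ne_zero_iff.2 h₂
  rw [halfDiscBlaschke, norm_div, norm_mul, norm_mul, div_pow, mul_pow, mul_pow, sq_norm_sub,
    sq_norm_sq_add_mul]
  generalize ‖z + conj a‖ = p at *
  generalize ‖(R ^ 2 - conj a * z : ℂ)‖ = q at *
  field_simp
  ring

-- In the half-disc of radius `4 * R` the reflection of `a` in the circle is so far away that it
-- costs at most half of the gain from the reflection of `a` in the imaginary axis.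
lemma norm_halfDiscBlaschke_le_exp (ha : 0 < a.re) (haR : ‖a‖ ≤ R) (hz : 0 ≤ z.re)
    (hzR : ‖z‖ ≤ R) :
    ‖halfDiscBlaschke (4 * R) a z‖ ≤ Real.exp (-(z.re * (a.re / ‖z + conj a‖ ^ 2))) := by
  set p := z.re * a.re with hp
  set D := ‖z + conj a‖ ^ 2 with hD
  set E := ‖((4 * R : ℝ) ^ 2 - conj a * z : ℂ)‖ ^ 2 with hE
  have hR : 0 < R := ha.trans_le ((re_le_norm a).trans haR)
  have : 0 ≤ p := mul_nonneg hz ha.le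
  have hD0 : 0 < D := pow_pos (norm_pos_iff.2 (add_conj_ne_zero ha hz)) 2
  have hDR : D ≤ (2 * R) ^ 2 := by
    have := norm_add_le z (conj a)
    rw [RCLike.norm_conj] at this
    rw [hD]; gcongr; linarith
  have hER : (15 * R ^ 2) ^ 2 ≤ E := by
    have h₁ := norm_sub_norm_le ((4 * R : ℝ) ^ 2 : ℂ) (conj a * z)
    have h₂ : ‖a‖ * ‖z‖ ≤ R * R := by gcongr
    rw [norm_mul, RCLike.norm_conj, norm_pow, Complex.norm_real,
      Real.norm_of_nonneg (by positivity)] at h₁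
    rw [hE]; gcongr; linarith
  have hE0 : 0 < E := hER.trans_lt' (by positivity)
  have hDE : 64 * R ^ 2 / E ≤ 2 / D := by
    rw [div_le_div_iff₀ hE0 hD0]
    nlinarith [mul_le_mul_of_nonneg_left hDR (sq_nonneg R)]
  refine (sq_le_sq₀ (norm_nonneg _) (Real.exp_pos _).le).1 ?_
  calc ‖halfDiscBlaschke (4 * R) a z‖ ^ 2
      = (1 + -(4 * p / D)) * (1 + 64 * R ^ 2 / E * p) := by
        rw [sq_norm_halfDiscBlaschke (add_conj_ne_zero ha hz)
          (sq_sub_conj_mul_ne_zero (by linarith) (by linarith))]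
        ring
    _ ≤ Real.exp (-(4 * p / D)) * Real.exp (2 / D * p) := by
      gcongr
      · rw [add_comm]; exact Real.add_one_le_exp _
      · calc 1 + 64 * R ^ 2 / E * p ≤ 2 / D * p + 1 := by rw [add_comm]; gcongr
          _ ≤ Real.exp (2 / D * p) := Real.add_one_le_exp _
    _ = Real.exp (-(z.re * (a.re / D))) ^ 2 := by
      rw [← Real.exp_add, ← Real.exp_nat_mul, hp]
      congr 1
      push_cast
      ring

end HalfDisc

section NormMajorant

variable {ρ : ℝ} {z : ℂ}

lemma norm_le_re_add_im_mul_arg (hz : 0 ≤ z.re) : ‖z‖ ≤ z.re + z.im * arg z := by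
  have hcos : 0 ≤ Real.cos (arg z) := Real.cos_nonneg_of_mem_Icc
    (abs_le.1 (abs_arg_le_pi_div_two_iff.2 hz))
  have hsin : Real.sin (arg z) ^ 2 ≤ Real.sin (arg z) * arg z := by
    have hsign : 0 ≤ Real.sin (arg z) * arg z := by
      rcases le_total 0 (arg z) with h | h
      · exact mul_nonneg (Real.sin_nonneg_of_nonneg_of_le_pi h (arg_le_pi z)) h
      · exact mul_nonneg_of_nonpos_of_nonpos
          (Real.sin_nonpos_of_nonpos_of_neg_pi_le h (neg_pi_lt_arg z).le) h
    calc Real.sin (arg z) ^ 2 = |Real.sin (arg z)| * |Real.sin (arg z)| := by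
          rw [← sq, sq_abs]
      _ ≤ |Real.sin (arg z)| * |arg z| :=
          mul_le_mul_of_nonneg_left Real.abs_sin_le_abs (abs_nonneg _)
      _ = Real.sin (arg z) * arg z := by rw [← abs_mul, abs_of_nonneg hsign]
  have hone : 1 ≤ Real.cos (arg z) + Real.sin (arg z) * arg z := by
    nlinarith [Real.sin_sq_add_cos_sq (arg z), Real.cos_le_one (arg z)]
  calc ‖z‖ ≤ ‖z‖ * (Real.cos (arg z) + Real.sin (arg z) * arg z) :=
        le_mul_of_one_le_right (norm_nonneg z) hone
    _ = z.re + z.im * arg z := by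
        rw [mul_add, ← mul_assoc, norm_mul_cos_arg, norm_mul_sin_arg]

/-- A holomorphic function on the right half-plane whose real part dominates `‖z‖` where
`‖z + 1‖ ≤ ρ`, but grows only logarithmically in `ρ` at each fixed `z`. The shift by `1` keeps the
imaginary axis away from the singularity of the logarithm. -/
noncomputable def normMajorant (ρ : ℝ) (z : ℂ) : ℂ :=
  (z + 1) * (1 + Real.log ρ - log (z + 1))

lemma re_normMajorant (ρ : ℝ) (z : ℂ) :
    (normMajorant ρ z).re =
      (z.re + 1) * (Real.log ρ - Real.log ‖z + 1‖) + (z.re + 1 + z.im * arg (z + 1)) := by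
  simp only [normMajorant, mul_re, add_re, one_re, sub_re, ofReal_re, log_re, add_im, one_im,
    sub_im, ofReal_im, log_im]
  ring

lemma re_normMajorant_eq_add (ρ : ℝ) (z : ℂ) :
    (normMajorant ρ z).re = (z.re + 1) * Real.log ρ + (normMajorant 1 z).re := by
  rw [re_normMajorant, re_normMajorant, Real.log_one]
  ring

lemma norm_le_re_normMajorant (hz : 0 ≤ z.re) (hρ : ‖z + 1‖ ≤ ρ) :
    ‖z‖ ≤ (normMajorant ρ z).re := by
  have hre : (z + 1).re = z.re + 1 := by simp
  have him : (z + 1).im = z.im := by simp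
  have hnorm : ‖z‖ ≤ ‖z + 1‖ := by
    rw [← sq_le_sq₀ (norm_nonneg _) (norm_nonneg _), Complex.sq_norm, Complex.sq_norm,
      normSq_apply, normSq_apply, hre, him]
    nlinarith
  have hlog : 0 ≤ Real.log ρ - Real.log ‖z + 1‖ := by
    have : 0 < ‖z + 1‖ := ((re_le_norm _).trans_lt' (by rw [hre]; linarith))
    exact sub_nonneg.2 (Real.log_le_log this hρ)
  have harg := norm_le_re_add_im_mul_arg (z := z + 1) (by rw [hre]; linarith)
  rw [hre, him] at harg
  rw [re_normMajorant]
  linarith [mul_nonneg (by linarith : 0 ≤ z.re + 1) hlog]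

lemma mul_exp_norm_mul_exp_neg_re_normMajorant_le {C ε : ℝ} (hC : 0 ≤ C) (hε : 0 ≤ ε)
    (hz : 0 ≤ z.re) (hρ : ‖z + 1‖ ≤ ρ) :
    C * Real.exp (ε * ‖z‖) * Real.exp (-(ε * (normMajorant ρ z).re)) ≤ C := by
  rw [mul_assoc, ← Real.exp_add, ← sub_eq_add_neg, ← mul_sub]
  exact mul_le_of_le_one_right hC (Real.exp_le_one_iff.2
    (mul_nonpos_of_nonneg_of_nonpos hε (sub_nonpos.2 (norm_le_re_normMajorant hz hρ))))

lemma differentiableAt_normMajorant (hz : 0 ≤ z.re) : DifferentiableAt ℂ (normMajorant ρ) z := by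
  have hslit : z + 1 ∈ slitPlane := Or.inl (by simp; linarith)
  unfold normMajorant
  fun_prop (disch := assumption)

end NormMajorant

section RightHalfPlane

variable {F : ℂ → ℂ} {C ε R : ℝ} {z : ℂ}

theorem norm_le_mul_exp_sub_sum_of_zeros {S : Finset ℂ} (hF : DiffContOnCl ℂ F {z | 0 < z.re})
    (hε : 0 ≤ ε) (hFC : ∀ z : ℂ, 0 ≤ z.re → ‖F z‖ ≤ C * Real.exp (ε * ‖z‖))
    (hS : ∀ a ∈ S, F a = 0 ∧ 0 < a.re ∧ ‖a‖ ≤ R) (hR : 1 ≤ R) (hz : 0 < z.re) (hzR : ‖z‖ ≤ R) :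
    ‖F z‖ ≤ C * Real.exp (ε * (normMajorant (5 * R) z).re -
      z.re * ∑ a ∈ S, a.re / ‖z + conj a‖ ^ 2) := by
  have hC : 0 ≤ C := by simpa using (norm_nonneg _).trans (hFC 0 le_rfl)
  have hmem {a : ℂ} (ha : 0 < a.re) (haR : ‖a‖ ≤ R) : a ∈ halfDisc (4 * R) :=
    ⟨ha, mem_ball_zero_iff.2 (by linarith)⟩
  set G : ℂ → ℂ := fun z => F z * exp (-(ε * normMajorant (5 * R) z)) with hGdef
  have hGnorm (z : ℂ) : ‖G z‖ = ‖F z‖ * Real.exp (-(ε * (normMajorant (5 * R) z).re)) := by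
    rw [hGdef, norm_mul, norm_exp, neg_re, re_ofReal_mul]
  have hG : DiffContOnCl ℂ G (halfDisc (4 * R)) := by
    refine (hF.mono Set.inter_subset_left).smul (DifferentiableOn.diffContOnCl fun z hz =>
      DifferentiableAt.differentiableWithinAt ?_)
    have := differentiableAt_normMajorant (ρ := 5 * R)
      (re_nonneg_and_norm_le_of_mem_closure_halfDisc hz).1
    fun_prop
  have hGC : ∀ z ∈ frontier (halfDisc (4 * R)), ‖G z‖ ≤ C := fun z hz => by
    obtain ⟨hre, hnorm⟩ :=
      re_nonneg_and_norm_le_of_mem_closure_halfDisc (frontier_subset_closure hz)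
    have hρ : ‖z + 1‖ ≤ 5 * R := (norm_add_le z 1).trans (by rw [norm_one]; linarith)
    calc ‖G z‖ ≤ C * Real.exp (ε * ‖z‖) * Real.exp (-(ε * (normMajorant (5 * R) z).re)) := by
          rw [hGnorm]; gcongr; exact hFC z hre
      _ ≤ C := mul_exp_norm_mul_exp_neg_re_normMajorant_le hC hε hre hρ
  have hGz : ‖G z‖ ≤ C * Real.exp (-(z.re * ∑ a ∈ S, a.re / ‖z + conj a‖ ^ 2)) :=
    calc ‖G z‖ ≤ C * ∏ a ∈ S, ‖halfDiscBlaschke (4 * R) a z‖ :=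
          norm_le_mul_prod_halfDiscBlaschke hG hGC
            (fun a ha => ⟨hmem (hS a ha).2.1 (hS a ha).2.2, by simp [hGdef, (hS a ha).1]⟩)
            (subset_closure (hmem hz hzR))
      _ ≤ C * ∏ a ∈ S, Real.exp (-(z.re * (a.re / ‖z + conj a‖ ^ 2))) := by
          gcongr with a ha
          exact norm_halfDiscBlaschke_le_exp (hS a ha).2.1 (hS a ha).2.2 hz.le hzR
      _ = C * Real.exp (-(z.re * ∑ a ∈ S, a.re / ‖z + conj a‖ ^ 2)) := by
          rw [← Real.exp_sum, Finset.sum_neg_distrib, Finset.mul_sum]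
  calc ‖F z‖ = ‖G z‖ * Real.exp (ε * (normMajorant (5 * R) z).re) := by
        rw [hGnorm, mul_assoc, ← Real.exp_add, neg_add_cancel, Real.exp_zero, mul_one]
    _ ≤ C * Real.exp (-(z.re * ∑ a ∈ S, a.re / ‖z + conj a‖ ^ 2)) *
        Real.exp (ε * (normMajorant (5 * R) z).re) := by gcongr
    _ = _ := by rw [mul_assoc, ← Real.exp_add, neg_add_eq_sub]

lemma norm_add_conj_le (z a : ℂ) : ‖z + conj a‖ ≤ (1 + ‖z‖) * (1 + ‖a‖) := by
  have := norm_add_le z (conj a)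
  rw [RCLike.norm_conj] at this
  nlinarith [norm_nonneg z, norm_nonneg a]

lemma mul_sum_re_div_sq_le {S : Finset ℂ} (hS : ∀ a ∈ S, 0 < a.re) (hz : 0 < z.re) :
    z.re / (1 + ‖z‖) ^ 2 * ∑ a ∈ S, a.re / (1 + ‖a‖) ^ 2 ≤
      z.re * ∑ a ∈ S, a.re / ‖z + conj a‖ ^ 2 :=
  calc z.re / (1 + ‖z‖) ^ 2 * ∑ a ∈ S, a.re / (1 + ‖a‖) ^ 2
      = z.re * ∑ a ∈ S, a.re / ((1 + ‖z‖) * (1 + ‖a‖)) ^ 2 := by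
        simp only [Finset.mul_sum, mul_pow]
        refine Finset.sum_congr rfl fun a _ => ?_
        field_simp
    _ ≤ z.re * ∑ a ∈ S, a.re / ‖z + conj a‖ ^ 2 := by
        gcongr with a ha
        · exact (hS a ha).le
        · exact pow_pos (norm_pos_iff.2 (add_conj_ne_zero (hS a ha) hz.le)) 2
        · exact norm_add_conj_le z a

theorem eq_zero_of_frequently_log_le_sum_re_div {δ B : ℝ} (hF : DiffContOnCl ℂ F {z | 0 < z.re})
    (hFε : ∀ ε > 0, ∃ C, ∀ z : ℂ, 0 ≤ z.re → ‖F z‖ ≤ C * Real.exp (ε * ‖z‖)) (hδ : 0 < δ)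
    (hzeros : ∃ᶠ R in atTop, ∃ S : Finset ℂ, (∀ a ∈ S, F a = 0 ∧ 0 < a.re ∧ ‖a‖ ≤ R) ∧
      δ * Real.log R - B ≤ ∑ a ∈ S, a.re / (1 + ‖a‖) ^ 2) (hz : 0 < z.re) : F z = 0 := by
  set κ := z.re / (1 + ‖z‖) ^ 2
  have hκ : 0 < κ := by positivity
  set ε := κ * δ / (2 * (z.re + 1)) with hεdef
  have hε : 0 < ε := by positivity
  have hεκ : ε * (z.re + 1) = κ * δ / 2 := by rw [hεdef]; field_simp
  obtain ⟨C, hC⟩ := hFε ε hε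
  have hC0 : 0 ≤ C := by simpa using (norm_nonneg _).trans (hC 0 le_rfl)
  set A := κ * δ / 2 * Real.log 5 + ε * (normMajorant 1 z).re + κ * B with hA
  have hbound : ∃ᶠ R in atTop, ‖F z‖ ≤ C * Real.exp (A - κ * δ / 2 * Real.log R) := by
    refine (hzeros.and_eventually (eventually_ge_atTop (max 1 ‖z‖))).mono ?_
    rintro R ⟨⟨S, hS, hSsum⟩, hR⟩
    obtain ⟨hR1, hzR⟩ := max_le_iff.1 hR
    have hsum : κ * (δ * Real.log R - B) ≤ z.re * ∑ a ∈ S, a.re / ‖z + conj a‖ ^ 2 :=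
      calc κ * (δ * Real.log R - B) ≤ κ * ∑ a ∈ S, a.re / (1 + ‖a‖) ^ 2 := by gcongr
        _ ≤ z.re * ∑ a ∈ S, a.re / ‖z + conj a‖ ^ 2 :=
          mul_sum_re_div_sq_le (fun a ha => (hS a ha).2.1) hz
    have hmajorant : ε * (normMajorant (5 * R) z).re =
        κ * δ / 2 * (Real.log 5 + Real.log R) + ε * (normMajorant 1 z).re := by
      rw [re_normMajorant_eq_add, Real.log_mul (by norm_num) (by positivity), mul_add, ← mul_assoc,
        hεκ]
    refine (norm_le_mul_exp_sub_sum_of_zeros hF hε.le hC hS hR1 hz hzR).trans ?_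
    refine mul_le_mul_of_nonneg_left (Real.exp_le_exp.2 ?_) hC0
    rw [hmajorant, hA]
    linarith
  have hlim : Tendsto (fun R => C * Real.exp (A - κ * δ / 2 * Real.log R)) atTop (𝓝 (C * 0)) := by
    refine (Real.tendsto_exp_atBot.comp ?_).const_mul C
    exact tendsto_const_nhds.add_atBot (tendsto_neg_atTop_atBot.comp
      (Real.tendsto_log_atTop.const_mul_atTop (by positivity)))
  rw [mul_zero] at hlim
  exact norm_le_zero_iff.1 (ge_of_tendsto_of_frequently hlim hbound)

end RightHalfPlane

section LowerDensity

variable {A : Set ℕ}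

lemma nonempty_of_lowerDensity_pos (hA : 0 < lowerDensity A) : A.Nonempty := by
  rw [Set.nonempty_iff_ne_empty]
  rintro rfl
  simp [lowerDensity] at hA

open scoped Classical in
lemma exists_eventually_mul_le_card_of_lowerDensity_pos (hA : 0 < lowerDensity A) :
    ∃ δ > 0, ∀ᶠ N : ℕ in atTop,
      δ * (N + 1) ≤ (((Finset.range (N + 1)).filter (· ∈ A)).card : ℝ) := by
  refine ⟨lowerDensity A / 4, by positivity, ?_⟩
  have hbdd : IsBoundedUnder (· ≥ ·) atTop fun N : ℕ =>
      (((Finset.range (N + 1)).filter (· ∈ A)).card : ℝ) / N :=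
    isBoundedUnder_of ⟨0, fun N => by positivity⟩
  have hlt : ∀ᶠ N : ℕ in atTop,
      lowerDensity A / 2 < (((Finset.range (N + 1)).filter (· ∈ A)).card : ℝ) / N :=
    eventually_lt_of_lt_liminf (half_lt_self hA) hbdd
  filter_upwards [hlt, eventually_ge_atTop 1] with N hN hN1
  have hN1' : (1 : ℝ) ≤ N := by exact_mod_cast hN1
  rw [lt_div_iff₀ (by positivity)] at hN
  nlinarith

open scoped Classical in
/-- The partial sum of `1 / (k + 1)` over `k ∈ A` minus the boundary term of its Abel summation, so
that the increments involve only the counting function of `A`. -/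
noncomputable def abelSum (A : Set ℕ) (N : ℕ) : ℝ :=
  ∑ k ∈ (Finset.range (N + 1)).filter (· ∈ A), (1 / (k + 1) : ℝ) -
    ((Finset.range (N + 1)).filter (· ∈ A)).card / (N + 2)

open scoped Classical in
lemma abelSum_le_sum (A : Set ℕ) (N : ℕ) :
    abelSum A N ≤ ∑ k ∈ (Finset.range (N + 1)).filter (· ∈ A), (1 / (k + 1) : ℝ) :=
  sub_le_self _ (by positivity)

open scoped Classical in
lemma abelSum_succ_sub (A : Set ℕ) (N : ℕ) :
    abelSum A (N + 1) - abelSum A N =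
      ((Finset.range (N + 2)).filter (· ∈ A)).card * (1 / (N + 2) - 1 / (N + 3)) := by
  simp only [abelSum, Finset.sum_filter, Finset.card_filter]
  rw [Finset.sum_range_succ _ (N + 1), Finset.sum_range_succ _ (N + 1)]
  split_ifs <;> push_cast <;> field_simp <;> ring

open scoped Classical in
lemma mul_log_sub_log_le_abelSum_succ_sub {δ : ℝ} {N : ℕ} (hδ : 0 ≤ δ)
    (hcard : δ * (N + 2) ≤ ((Finset.range (N + 2)).filter (· ∈ A)).card) :
    δ * (Real.log (N + 4) - Real.log (N + 3)) ≤ abelSum A (N + 1) - abelSum A N := by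
  have hlog : Real.log (N + 4) - Real.log (N + 3) ≤ 1 / (N + 3) := by
    rw [← Real.log_div (by positivity) (by positivity)]
    refine (Real.log_le_sub_one_of_pos (by positivity)).trans_eq ?_
    field_simp
    ring
  calc δ * (Real.log (N + 4) - Real.log (N + 3)) ≤ δ * (1 / (N + 3)) := by gcongr
    _ = δ * (N + 2) * (1 / (N + 2) - 1 / (N + 3)) := by field_simp; ring
    _ ≤ ((Finset.range (N + 2)).filter (· ∈ A)).card * (1 / (N + 2) - 1 / (N + 3)) := by
      gcongr
      exact sub_nonneg.2 (by gcongr; norm_num)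
    _ = abelSum A (N + 1) - abelSum A N := (abelSum_succ_sub A N).symm

open scoped Classical in
theorem exists_eventually_log_le_sum_one_div (hA : 0 < lowerDensity A) :
    ∃ δ > 0, ∃ B : ℝ, ∀ᶠ N : ℕ in atTop,
      δ * Real.log (N + 1) - B ≤
        ∑ k ∈ (Finset.range (N + 1)).filter (· ∈ A), (1 / (k + 1) : ℝ) := by
  obtain ⟨δ, hδ, hcard⟩ := exists_eventually_mul_le_card_of_lowerDensity_pos hA
  obtain ⟨N₀, hN₀⟩ := eventually_atTop.1 hcard
  have hmono : ∀ N ≥ N₀, δ * Real.log (N + 3) - (δ * Real.log (N₀ + 3) - abelSum A N₀) ≤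
      abelSum A N := by
    intro N hN
    induction N, hN using Nat.le_induction with
    | base => linarith
    | succ N hN ih =>
      have hN₁ := hN₀ (N + 1) (by omega)
      push_cast at hN₁ ⊢
      rw [add_assoc, one_add_one_eq_two] at hN₁
      have hstep := mul_log_sub_log_le_abelSum_succ_sub hδ.le hN₁
      rw [show (N : ℝ) + 1 + 3 = N + 4 by ring]
      linarith
  refine ⟨δ, hδ, δ * Real.log (N₀ + 3) - abelSum A N₀, ?_⟩
  filter_upwards [eventually_ge_atTop N₀] with N hN
  refine le_trans ?_ ((hmono N hN).trans (abelSum_le_sum A N))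
  gcongr
  norm_num

end LowerDensity

section Zeros

variable {a d : ℂ} {k : ℕ}

lemma norm_natCast_add_one_mul (k : ℕ) (d : ℂ) : ‖(k + 1) * d‖ = (k + 1) * ‖d‖ := by
  rw [norm_mul, ← Nat.cast_succ, norm_natCast, Nat.cast_succ]

lemma mul_half_re_le_re_of_mem_ball (hd : 0 ≤ d.re) (ha : a ∈ ball ((k + 1) * d) (d.re / 2)) :
    (k + 1) * (d.re / 2) ≤ a.re := by
  have h := (abs_lt.1 ((abs_re_le_norm _).trans_lt (mem_ball_iff_norm.1 ha))).1
  simp only [sub_re, mul_re, add_re, natCast_re, one_re, add_im, natCast_im, one_im] at h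
  nlinarith [k.cast_nonneg (α := ℝ)]

lemma norm_le_mul_two_norm_of_mem_ball (ha : a ∈ ball ((k + 1) * d) (d.re / 2)) :
    ‖a‖ ≤ (k + 1) * (2 * ‖d‖) := by
  have h := norm_le_norm_add_norm_sub' a ((k + 1) * d)
  rw [norm_natCast_add_one_mul] at h
  nlinarith [k.cast_nonneg (α := ℝ), re_le_norm d, norm_nonneg d, mem_ball_iff_norm.1 ha,
    mul_nonneg k.cast_nonneg (norm_nonneg d)]

lemma mul_one_div_succ_le_re_div_sq_of_mem_ball (hd : 0 ≤ d.re)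
    (ha : a ∈ ball ((k + 1) * d) (d.re / 2)) :
    d.re / 2 / (1 + 2 * ‖d‖) ^ 2 * (1 / (k + 1)) ≤ a.re / (1 + ‖a‖) ^ 2 := by
  have hre := mul_half_re_le_re_of_mem_ball hd ha
  have hnorm : 1 + ‖a‖ ≤ (k + 1) * (1 + 2 * ‖d‖) := by
    linarith [norm_le_mul_two_norm_of_mem_ball ha, k.cast_nonneg (α := ℝ)]
  calc d.re / 2 / (1 + 2 * ‖d‖) ^ 2 * (1 / (k + 1))
      = (k + 1) * (d.re / 2) / ((k + 1) * (1 + 2 * ‖d‖)) ^ 2 := by field_simp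
    _ ≤ a.re / (1 + ‖a‖) ^ 2 := by
      have hre0 : 0 ≤ a.re := hre.trans' (by positivity)
      gcongr

lemma injOn_of_mem_ball_mul {A : Set ℕ} {a : ℕ → ℂ}
    (ha : ∀ k ∈ A, a k ∈ ball ((k + 1) * d) (d.re / 2)) : Set.InjOn a A := by
  intro j hj k hk hjk
  by_contra hne
  have hlt : ‖(j : ℂ) - k‖ * ‖d‖ < d.re := by
    have h₁ := mem_ball_iff_norm.1 (ha j hj)
    have h₂ := mem_ball_iff_norm.1 (ha k hk)
    calc ‖(j : ℂ) - k‖ * ‖d‖ = ‖(a k - (k + 1) * d) - (a j - (j + 1) * d)‖ := by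
          rw [← norm_mul, hjk]; ring_nf
      _ ≤ ‖a k - (k + 1) * d‖ + ‖a j - (j + 1) * d‖ := norm_sub_le _ _
      _ < d.re := by linarith
  have hone : 1 ≤ ‖(j : ℂ) - k‖ := by
    rw [show (j : ℂ) - k = ((j - k : ℤ) : ℂ) by push_cast; rfl, norm_intCast]
    exact_mod_cast Int.one_le_abs (sub_ne_zero.2 (Nat.cast_injective.ne hne))
  exact hlt.not_ge ((re_le_norm d).trans (le_mul_of_one_le_left (norm_nonneg d) hone))

theorem eq_zero_of_zeros_near_ray {F : ℂ → ℂ} {A : Set ℕ} {z : ℂ}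
    (hF : DiffContOnCl ℂ F {z | 0 < z.re})
    (hFε : ∀ ε > 0, ∃ C, ∀ z : ℂ, 0 ≤ z.re → ‖F z‖ ≤ C * Real.exp (ε * ‖z‖)) (hd : 0 < d.re)
    (hA : 0 < lowerDensity A) (hzeros : ∀ k ∈ A, ∃ a ∈ ball ((k + 1) * d) (d.re / 2), F a = 0)
    (hz : 0 < z.re) : F z = 0 := by
  classical
  choose! a ha hFa using hzeros
  obtain ⟨δ, hδ, B, hsum⟩ := exists_eventually_log_le_sum_one_div hA
  have hdnorm : 0 < ‖d‖ := hd.trans_le (re_le_norm d)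
  have hR : Tendsto (fun N : ℕ => (N + 1 : ℝ) * (2 * ‖d‖)) atTop atTop :=
    (tendsto_natCast_atTop_atTop.atTop_add tendsto_const_nhds).atTop_mul_const (by positivity)
  set κ := d.re / 2 / (1 + 2 * ‖d‖) ^ 2
  have : 0 < κ := by positivity
  refine eq_zero_of_frequently_log_le_sum_re_div (δ := κ * δ)
    (B := κ * (B + δ * Real.log (2 * ‖d‖))) hF hFε (by positivity)
    (hR.frequently (hsum.mono fun N hN =>
      ⟨((Finset.range (N + 1)).filter (· ∈ A)).image a, ?_, ?_⟩).frequently) hz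
  · simp only [Finset.forall_mem_image, Finset.mem_filter, Finset.mem_range]
    rintro k ⟨hkN, hk⟩
    have hkN' : (k : ℝ) ≤ N := by exact_mod_cast Nat.lt_succ_iff.1 hkN
    exact ⟨hFa k hk, (mul_half_re_le_re_of_mem_ball hd.le (ha k hk)).trans_lt' (by positivity),
      (norm_le_mul_two_norm_of_mem_ball (ha k hk)).trans (by gcongr)⟩
  · rw [Finset.sum_image ((injOn_of_mem_ball_mul ha).mono
      fun k hk => (Finset.mem_filter.1 hk).2)]
    calc κ * δ * Real.log ((N + 1) * (2 * ‖d‖)) - κ * (B + δ * Real.log (2 * ‖d‖))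
        = κ * (δ * Real.log (N + 1) - B) := by
          rw [Real.log_mul (by positivity) (by positivity)]; ring
      _ ≤ κ * ∑ k ∈ (Finset.range (N + 1)).filter (· ∈ A), (1 / (k + 1) : ℝ) := by gcongr
      _ ≤ ∑ k ∈ (Finset.range (N + 1)).filter (· ∈ A), (a k).re / (1 + ‖a k‖) ^ 2 := by
        rw [Finset.mul_sum]
        exact Finset.sum_le_sum fun k hk =>
          mul_one_div_succ_le_re_div_sq_of_mem_ball hd.le (ha k (Finset.mem_filter.1 hk).2)

theorem exists_eq_zero_of_norm_lt_of_le_frontier {E : Type*} [NormedAddCommGroup E]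
    [NormedSpace ℂ E] [Nontrivial E] {U : Set E} {f : E → ℂ} {a : E} {m : ℝ}
    (hU : Bornology.IsBounded U) (hf : DiffContOnCl ℂ f U) (ha : a ∈ closure U) (ham : ‖f a‖ < m)
    (hm : ∀ z ∈ frontier U, m ≤ ‖f z‖) : ∃ z ∈ closure U, f z = 0 := by
  by_contra! hne
  have hm0 : 0 < m := (norm_nonneg _).trans_lt ham
  have hinv : ‖(f a)⁻¹‖ ≤ m⁻¹ :=
    norm_le_of_forall_mem_frontier_norm_le hU (hf.inv hne)
      (fun z hz => by rw [Pi.inv_apply, norm_inv]; gcongr; exact hm z hz) ha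
  rw [norm_inv, inv_le_inv₀ (norm_pos_iff.2 (hne a ha)) hm0] at hinv
  exact hinv.not_gt ham

end Zeros

section FrequentlyHypercyclic

variable {f : ℂ → ℂ}

-- Approximating `z - 1` rather than `z` puts the zeros near `k + 1`, hence inside the half-plane
-- even for `k = 0`.
theorem FHCEnt.exists_zeros_near (hf : FHCEnt f) {r : ℝ} (hr : 0 < r) :
    ∃ A : Set ℕ, 0 < lowerDensity A ∧ ∀ k ∈ A, ∃ z ∈ closedBall (k + 1 : ℂ) r, f z = 0 := by
  refine ⟨_, hf.2 (fun z => z - 1) (by fun_prop) (1 + r) (by positivity) (r / 2) (by positivity),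
    fun k hk => ?_⟩
  have happrox : ∀ z ∈ closedBall (k + 1 : ℂ) r, ‖f z - (z - (k + 1))‖ < r / 2 := fun z hz => by
    have hzk : ‖z - k‖ ≤ 1 + r := by
      have := norm_le_norm_add_norm_sub' (z - k) 1
      rw [sub_sub, norm_one] at this
      exact this.trans (by gcongr; exact mem_closedBall_iff_norm.1 hz)
    simpa [sub_sub] using hk (z - k) hzk
  rw [← closure_ball _ hr.ne']
  refine exists_eq_zero_of_norm_lt_of_le_frontier (a := (k + 1 : ℂ)) (m := r / 2) isBounded_ball
    hf.1.diffContOnCl (subset_closure (mem_ball_self hr)) ?_ fun z hz => ?_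
  · simpa using happrox (k + 1) (mem_closedBall_self hr.le)
  · rw [frontier_ball _ hr.ne'] at hz
    have := norm_le_norm_add_norm_sub (f z) (z - (k + 1))
    rw [mem_sphere_iff_norm.1 hz] at this
    linarith [happrox z (sphere_subset_closedBall hz)]

theorem FHCEnt.exists_apply_succ_ne_zero (hf : FHCEnt f) : ∃ k : ℕ, f (k + 1) ≠ 0 := by
  obtain ⟨k, hk⟩ := nonempty_of_lowerDensity_pos
    (hf.2 (fun _ => 1) (by fun_prop) 1 one_pos 1 one_pos)
  refine ⟨k, fun hzero => ?_⟩
  simpa [add_comm, hzero] using hk 1 (by simp)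

theorem not_fhcEnt_of_norm_le_exp_re {d u : ℂ} (hd : 0 < d.re)
    (hfε : ∀ ε > 0, ∃ C, ∀ z : ℂ, 0 ≤ (z * d).re →
      ‖f z‖ ≤ C * Real.exp ((z * u).re + ε * ‖z‖)) : ¬ FHCEnt f := by
  intro hf
  have hd0 : d ≠ 0 := by rintro rfl; simp at hd
  have hdnorm : 0 < ‖d‖ := norm_pos_iff.2 hd0
  set F : ℂ → ℂ := fun z => f (z / d) * exp (-(z / d * u)) with hFdef
  have hF : Differentiable ℂ F := by
    have := hf.1
    fun_prop
  have hFε : ∀ ε > 0, ∃ C, ∀ z : ℂ, 0 ≤ z.re → ‖F z‖ ≤ C * Real.exp (ε * ‖z‖) := by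
    intro ε hε
    obtain ⟨C, hC⟩ := hfε (ε * ‖d‖) (by positivity)
    refine ⟨C, fun z hz => ?_⟩
    calc ‖F z‖ = ‖f (z / d)‖ * Real.exp (-(z / d * u).re) := by
          rw [hFdef, norm_mul, norm_exp, neg_re]
      _ ≤ C * Real.exp ((z / d * u).re + ε * ‖d‖ * ‖z / d‖) * Real.exp (-(z / d * u).re) := by
          gcongr
          exact hC _ (by rwa [div_mul_cancel₀ z hd0])
      _ = C * Real.exp (ε * ‖z‖) := by
          rw [mul_assoc, ← Real.exp_add, norm_div]
          congr 2
          field_simp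
          ring
  obtain ⟨A, hA, hzeros⟩ := hf.exists_zeros_near (r := d.re / 3 / ‖d‖) (by positivity)
  have hFzeros : ∀ k ∈ A, ∃ a ∈ ball ((k + 1) * d) (d.re / 2), F a = 0 := fun k hk => by
    obtain ⟨z, hz, hfz⟩ := hzeros k hk
    refine ⟨z * d, ?_, by simp [hFdef, hd0, hfz]⟩
    rw [mem_ball_iff_norm, ← sub_mul, norm_mul]
    rw [mem_closedBall_iff_norm, le_div_iff₀ hdnorm] at hz
    linarith
  obtain ⟨k, hk⟩ := hf.exists_apply_succ_ne_zero
  have hre : 0 < ((k + 1) * d).re := by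
    rw [← Nat.cast_succ, ← ofReal_natCast, re_ofReal_mul]
    positivity
  have hFk := eq_zero_of_zeros_near_ray hF.diffContOnCl hFε hd hA hFzeros hre
  simp [hFdef, hd0, hk] at hFk

end FrequentlyHypercyclic

section Segment

variable {v w z : ℂ} {K : Set ℂ} {f : ℂ → ℂ}

lemma MemExp.exists_norm_le {ε : ℝ} (hf : MemExp K f) (hε : 0 < ε) :
    ∃ C, ∀ z, ‖f z‖ ≤ C * Real.exp (suppFn K z + ε * ‖z‖) := by
  obtain ⟨n, hn⟩ := exists_nat_one_div_lt hε
  obtain ⟨C, hC⟩ := hf.2 (n + 1) n.succ_pos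
  have hC' (z : ℂ) : ‖f z‖ * Real.exp (-(suppFn K z) - ‖z‖ / (n + 1 : ℕ)) ≤ C :=
    hC (Set.mem_range_self z)
  have hC0 : 0 ≤ C := (hC' 0).trans' (by positivity)
  refine ⟨C, fun z => ?_⟩
  have hcancel : -(suppFn K z) - ‖z‖ / (n + 1 : ℕ) + (suppFn K z + 1 / (n + 1) * ‖z‖) = 0 := by
    push_cast
    ring
  calc ‖f z‖ = ‖f z‖ * Real.exp (-(suppFn K z) - ‖z‖ / (n + 1 : ℕ)) *
        Real.exp (suppFn K z + 1 / (n + 1) * ‖z‖) := by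
        rw [mul_assoc, ← Real.exp_add, hcancel, Real.exp_zero, mul_one]
    _ ≤ C * Real.exp (suppFn K z + ε * ‖z‖) := by gcongr; exact hC' z

lemma suppFn_segment_le (v w z : ℂ) : suppFn (segment ℝ v w) z ≤ max (z * v).re (z * w).re := by
  have hconvex : ConvexOn ℝ Set.univ fun u : ℂ => (z * u).re :=
    (reLm.comp (LinearMap.mulLeft ℝ z)).convexOn convex_univ
  refine csSup_le (Set.Nonempty.image _ ⟨v, left_mem_segment ℝ v w⟩) ?_
  rintro _ ⟨u, hu, rfl⟩
  exact hconvex.le_max_of_mem_segment (Set.mem_univ v) (Set.mem_univ w) hu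

lemma exists_re_mul_le_re_mul (h : v = w ∨ v.re < w.re) :
    ∃ d : ℂ, 0 < d.re ∧ ∀ z : ℂ, 0 ≤ (z * d).re → (z * v).re ≤ (z * w).re := by
  rcases h with rfl | h
  · exact ⟨1, one_pos, fun _ _ => le_rfl⟩
  · exact ⟨w - v, by simpa using h, fun z hz => by simpa [mul_sub] using hz⟩

theorem not_fhcEnt_of_memExp_segment (h : v = w ∨ v.re < w.re) (hf : MemExp (segment ℝ v w) f) :
    ¬ FHCEnt f := by
  obtain ⟨d, hd, hvw⟩ := exists_re_mul_le_re_mul h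
  refine not_fhcEnt_of_norm_le_exp_re (u := w) hd fun ε hε => ?_
  obtain ⟨C, hC⟩ := hf.exists_norm_le hε
  have hC0 : 0 ≤ C :=
    nonneg_of_mul_nonneg_left ((norm_nonneg _).trans (hC 0)) (Real.exp_pos _)
  refine ⟨C, fun z hz => (hC z).trans ?_⟩
  gcongr
  exact (suppFn_segment_le v w z).trans_eq (max_eq_right (hvw z hz))

end Segment

/-- **Theorem 6.** If `K = [v,w]` is a singleton or a non-vertical line segment, then no
function of `Exp(K)` is frequently hypercyclic for `T₁` on `H(ℂ)`. -/
theorem stmt4 (v w : ℂ) (h : v = w ∨ v.re ≠ w.re)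
    (f : ℂ → ℂ) (hf : MemExp (segment ℝ v w) f) : ¬ FHCEnt f := by
  rcases h with h | h
  · exact not_fhcEnt_of_memExp_segment (.inl h) hf
  · rcases h.lt_or_gt with h | h
    · exact not_fhcEnt_of_memExp_segment (.inr h) hf
    · exact not_fhcEnt_of_memExp_segment (.inr h) (segment_symm ℝ v w ▸ hf)
end

section
/- Let f be an entire function of exponential type, let K ⊆ ℂ be a compact convex set containing the origin, and let A ⊆ ℂ be a bounded infinite set such that for every α ∈ A the function f_α defined by f_α(z) := f(αz) belongs to Exp(K). Then the linear span of {f_α : α ∈ A} is dense in Exp(K) — meaning that for every g ∈ Exp(K), every n ∈ ℕ and every ε > 0 there is a finite linear combination h of the functions f_α (α ∈ A) with ‖g − h‖_{K,n} < ε — if and only if f^{(k)}(0) ≠ 0 for every integer k ≥ 0. -/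
open Filter Complex

/-!
Multiplication by `w = exp (-H_K - |·| / n)` embeds `Exp(K)` with the norm `‖·‖_{K,n}` into the
bounded continuous functions. Since `F ∈ Exp(K)` is also bounded at the finer level `2n`, the curve
`s ↦ F(s·) w` stays bounded, hence is holomorphic, on a neighbourhood of `[0, 1]`, and its `k`-th
derivative at `0` is `F⁽ᵏ⁾(0) zᵏ w`. Let `M` be the closed span of the `f_α w`. For a suitable
`α₀ ∈ A` the curve of `F = f_{α₀}` passes through `f_α w` at `s = α / α₀`, so it lies in `M` on a
sequence accumulating in its domain; the identity theorem modulo `M` puts the whole curve in `M`,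
and its derivatives at `0` put every `zᵏ w` in `M`. Applied to the curve of any `g ∈ Exp(K)`, the
same theorem then carries membership in `M` from the Taylor coefficients at `s = 0` to `g w` at
`s = 1`. Conversely `F ↦ F⁽ᵐ⁾(0)` is continuous by Cauchy's estimate, so if it kills `f` it kills
every limit of combinations of dilates, but not `zᵐ`.
-/

open scoped BoundedContinuousFunction Topology

section VectorValuedHolomorphy

variable {X F : Type*} [TopologicalSpace X] [NormedAddCommGroup F] [NormedSpace ℂ F]

theorem circleIntegral_comp_continuousLinearMap {E : Type*} [NormedAddCommGroup E]
    [NormedSpace ℂ E] [CompleteSpace E] [CompleteSpace F] (L : E →L[ℂ] F) {f : ℂ → E} {c : ℂ}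
    {R : ℝ} (hf : CircleIntegrable f c R) :
    (∮ z in C(c, R), L (f z)) = L (∮ z in C(c, R), f z) := by
  simp only [circleIntegral, ← map_smul]
  exact L.intervalIntegral_comp_comm hf.out

/-- Schwarz's lemma makes the evaluations `s ↦ Φ s x` Lipschitz near `s`, uniformly in `x`. -/
theorem continuousOn_of_differentiableOn_eval {Φ : ℂ → X →ᵇ F} {U : Set ℂ} (hU : IsOpen U)
    (hbdd : ∀ s ∈ U, ∃ C, ∀ᶠ t in 𝓝 s, ‖Φ t‖ ≤ C)
    (hdiff : ∀ x, DifferentiableOn ℂ (fun s => Φ s x) U) : ContinuousOn Φ U := by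
  intro s hs
  obtain ⟨C, hC⟩ := hbdd s hs
  obtain ⟨r, hr, hball⟩ := Metric.eventually_nhds_iff_ball.1 (hC.and (hU.eventually_mem hs))
  have hC0 : 0 ≤ C := (norm_nonneg _).trans (hball s (Metric.mem_ball_self hr)).1
  have hmaps (x : X) :
      Set.MapsTo (fun t => Φ t x) (Metric.ball s r) (Metric.closedBall (Φ s x) (2 * C)) := by
    intro t ht
    rw [Metric.mem_closedBall, two_mul]
    calc dist (Φ t x) (Φ s x) ≤ ‖Φ t‖ + ‖Φ s‖ :=
          (BoundedContinuousFunction.dist_coe_le_dist x).trans (dist_le_norm_add_norm _ _)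
      _ ≤ C + C := add_le_add (hball t ht).1 (hball s (Metric.mem_ball_self hr)).1
  refine (continuousAt_of_locally_lipschitz hr (2 * C / r) fun t ht => ?_).continuousWithinAt
  refine (BoundedContinuousFunction.dist_le (by positivity)).2 fun x => ?_
  exact Complex.dist_le_div_mul_dist_of_mapsTo_ball
    ((hdiff x).mono fun t ht => (hball t ht).2) (hmaps x) ht

/-- Evaluating at each point turns the claim into the scalar Cauchy formula, so `Φ` is locally its
own Cauchy integral. -/
theorem differentiableOn_of_differentiableOn_eval [CompleteSpace F] {Φ : ℂ → X →ᵇ F} {U : Set ℂ}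
    (hU : IsOpen U) (hbdd : ∀ s ∈ U, ∃ C, ∀ᶠ t in 𝓝 s, ‖Φ t‖ ≤ C)
    (hdiff : ∀ x, DifferentiableOn ℂ (fun s => Φ s x) U) : DifferentiableOn ℂ Φ U := by
  intro s hs
  obtain ⟨r, hr, hrU⟩ := Metric.nhds_basis_closedBall.mem_iff.1 (hU.mem_nhds hs)
  lift r to NNReal using hr.le
  have hcont : ContinuousOn Φ (Metric.closedBall s r) :=
    (continuousOn_of_differentiableOn_eval hU hbdd hdiff).mono hrU
  have hcauchy : Set.EqOn
      (fun w => (2 * Real.pi * I : ℂ)⁻¹ • ∮ z in C(s, r), (z - w)⁻¹ • Φ z) Φ (Metric.ball s r) := by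
    intro w hw
    have hint : CircleIntegrable (fun z => (z - w)⁻¹ • Φ z) s r := by
      have hne : ∀ z ∈ Metric.sphere s r, z - w ≠ 0 := fun z hz =>
        sub_ne_zero.2 (Metric.sphere_disjoint_ball.ne_of_mem hz hw)
      exact (((continuousOn_id.sub continuousOn_const).inv₀ hne).smul
        (hcont.mono Metric.sphere_subset_closedBall)).circleIntegrable r.2
    ext x
    have heval : (∮ z in C(s, r), (z - w)⁻¹ • Φ z) x = ∮ z in C(s, r), (z - w)⁻¹ • Φ z x :=
      (circleIntegral_comp_continuousLinearMap (BoundedContinuousFunction.evalCLM ℂ x) hint).symm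
    rw [BoundedContinuousFunction.smul_apply, heval]
    exact ((hdiff x).mono hrU).diffContOnCl_ball (U := Metric.closedBall s r) subset_rfl
      |>.two_pi_i_inv_smul_circleIntegral_sub_inv_smul hw
  have hpow := hasFPowerSeriesOn_cauchy_integral
    ((hcont.mono Metric.sphere_subset_closedBall).circleIntegrable r.2) hr
  have hΦ : Φ =ᶠ[𝓝 s] _ := (hcauchy.eventuallyEq_of_mem (Metric.ball_mem_nhds s hr)).symm
  exact (hpow.analyticAt.differentiableAt.congr_of_eventuallyEq hΦ).differentiableWithinAt

end VectorValuedHolomorphy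

section ClosedSubmodule

variable {𝕜 E F : Type*} [NontriviallyNormedField 𝕜] [NormedAddCommGroup E] [NormedSpace 𝕜 E]
  [NormedAddCommGroup F] [NormedSpace 𝕜 F]

theorem iteratedDeriv_continuousLinearMap_comp (L : E →L[𝕜] F) {Φ : 𝕜 → E} {s : 𝕜} {k : ℕ}
    (hΦ : ContDiffAt 𝕜 k Φ s) :
    iteratedDeriv k (fun t => L (Φ t)) s = L (iteratedDeriv k Φ s) := by
  change iteratedDeriv k (L ∘ Φ) s = _
  rw [iteratedDeriv_eq_iteratedFDeriv, L.iteratedFDeriv_comp_left hΦ le_rfl]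
  rfl

theorem iteratedDeriv_mem_of_eventually_mem {M : Submodule 𝕜 E} (hM : IsClosed (M : Set E))
    {Φ : 𝕜 → E} {s : 𝕜} {k : ℕ} (hΦ : ContDiffAt 𝕜 k Φ s) (hmem : ∀ᶠ t in 𝓝 s, Φ t ∈ M) :
    iteratedDeriv k Φ s ∈ M := by
  have : IsClosed (M : Set E) := hM
  have hquot : (fun t => M.mkQL (Φ t)) =ᶠ[𝓝 s] fun _ => 0 :=
    hmem.mono fun t ht => (Submodule.Quotient.mk_eq_zero M).2 ht
  refine (Submodule.Quotient.mk_eq_zero M).1 ?_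
  calc M.mkQL (iteratedDeriv k Φ s)
      = iteratedDeriv k (fun t => M.mkQL (Φ t)) s :=
        (iteratedDeriv_continuousLinearMap_comp M.mkQL hΦ).symm
    _ = 0 := by rw [hquot.iteratedDeriv_eq, iteratedDeriv_fun_const_zero]

theorem forall_mem_of_frequently_mem {M : Submodule 𝕜 E} (hM : IsClosed (M : Set E))
    {Φ : 𝕜 → E} {U : Set 𝕜} (hΦ : AnalyticOnNhd 𝕜 Φ U) (hU : IsPreconnected U) {s₀ : 𝕜}
    (hs₀ : s₀ ∈ U) (hfreq : ∃ᶠ s in 𝓝[≠] s₀, Φ s ∈ M) : ∀ s ∈ U, Φ s ∈ M := by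
  have : IsClosed (M : Set E) := hM
  have hzero : Set.EqOn (M.mkQL ∘ Φ) 0 U :=
    (M.mkQL.comp_analyticOnNhd hΦ).eqOn_zero_of_preconnected_of_frequently_eq_zero hU hs₀
      (hfreq.mono fun s hs => (Submodule.Quotient.mk_eq_zero M).2 hs)
  exact fun s hs => (Submodule.Quotient.mk_eq_zero M).1 (hzero hs)

theorem forall_mem_of_iteratedDeriv_mem {E : Type*} [NormedAddCommGroup E] [NormedSpace ℂ E]
    [CompleteSpace E] {M : Submodule ℂ E} (hM : IsClosed (M : Set E)) {Φ : ℂ → E} {U : Set ℂ}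
    (hΦ : AnalyticOnNhd ℂ Φ U) (hU : IsPreconnected U) {s₀ : ℂ} (hs₀ : s₀ ∈ U)
    (hderiv : ∀ k, iteratedDeriv k Φ s₀ ∈ M) : ∀ s ∈ U, Φ s ∈ M := by
  have hnear : ∀ᶠ s in 𝓝 s₀, Φ s ∈ M := by
    obtain ⟨r, hr, hball⟩ :=
      Metric.eventually_nhds_iff_ball.1 (hΦ s₀ hs₀).eventually_analyticAt
    have hdiff : DifferentiableOn ℂ Φ (Metric.ball s₀ r) :=
      fun s hs => (hball s hs).differentiableAt.differentiableWithinAt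
    filter_upwards [Metric.ball_mem_nhds s₀ hr] with s hs
    refine hM.mem_of_tendsto (Complex.hasSum_taylorSeries_on_ball hdiff hs)
      (Eventually.of_forall fun t => M.sum_mem fun k _ => ?_)
    exact M.smul_mem _ (M.smul_mem _ (hderiv k))
  exact forall_mem_of_frequently_mem hM hΦ hU hs₀ (hnear.filter_mono nhdsWithin_le_nhds).frequently

end ClosedSubmodule

section SupportFunction

variable {K : Set ℂ}

theorem re_mul_le_suppFn (hK : Bornology.IsBounded K) {u : ℂ} (hu : u ∈ K) (z : ℂ) :
    (z * u).re ≤ suppFn K z := by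
  obtain ⟨R, hR⟩ := hK.exists_norm_le
  refine le_csSup ⟨‖z‖ * R, ?_⟩ (Set.mem_image_of_mem _ hu)
  rintro _ ⟨v, hv, rfl⟩
  calc (z * v).re ≤ ‖z‖ * ‖v‖ := (Complex.re_le_norm _).trans_eq (norm_mul z v)
    _ ≤ ‖z‖ * R := by gcongr; exact hR v hv

theorem suppFn_le (hne : K.Nonempty) {z : ℂ} {b : ℝ} (hb : ∀ u ∈ K, (z * u).re ≤ b) :
    suppFn K z ≤ b :=
  csSup_le (hne.image _) (Set.forall_mem_image.2 hb)

theorem suppFn_nonneg (hK : Bornology.IsBounded K) (h0 : (0 : ℂ) ∈ K) (z : ℂ) :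
    0 ≤ suppFn K z := by
  simpa using re_mul_le_suppFn hK h0 z

theorem suppFn_add_le (hK : Bornology.IsBounded K) (hne : K.Nonempty) (z w : ℂ) :
    suppFn K (z + w) ≤ suppFn K z + suppFn K w :=
  suppFn_le hne fun u hu => by
    rw [add_mul, Complex.add_re]
    exact add_le_add (re_mul_le_suppFn hK hu z) (re_mul_le_suppFn hK hu w)

theorem suppFn_ofReal_mul (K : Set ℂ) {t : ℝ} (ht : 0 ≤ t) (z : ℂ) :
    suppFn K (t * z) = t * suppFn K z := by
  rw [suppFn, suppFn, ← smul_eq_mul t, ← Real.sSup_smul_of_nonneg ht, ← Set.image_smul,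
    Set.image_image]
  simp only [mul_assoc, Complex.re_ofReal_mul, smul_eq_mul]

theorem suppFn_le_mul_norm (hne : K.Nonempty) {R : ℝ} (hR : ∀ u ∈ K, ‖u‖ ≤ R) (z : ℂ) :
    suppFn K z ≤ R * ‖z‖ :=
  suppFn_le hne fun u hu =>
    calc (z * u).re ≤ ‖z‖ * ‖u‖ := (Complex.re_le_norm _).trans_eq (norm_mul z u)
      _ ≤ R * ‖z‖ := by rw [mul_comm]; gcongr; exact hR u hu

theorem continuous_suppFn (hK : Bornology.IsBounded K) (hne : K.Nonempty) :
    Continuous (suppFn K) := by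
  obtain ⟨R, hR⟩ := hK.exists_norm_le
  refine (LipschitzWith.of_le_add_mul' R fun z w => ?_).continuous
  calc suppFn K z = suppFn K (w + (z - w)) := by rw [add_sub_cancel]
    _ ≤ suppFn K w + suppFn K (z - w) := suppFn_add_le hK hne _ _
    _ ≤ suppFn K w + R * dist z w := by
      rw [dist_eq_norm]; gcongr; exact suppFn_le_mul_norm hne hR _

/-- Subadditivity compares `s` with a nearby `t ∈ [0, 1]`, and `H_K (t z) = t H_K z ≤ H_K z`
because `0 ∈ K`. -/
theorem exists_thickening_suppFn_mul_add_le (hK : Bornology.IsBounded K) (h0 : (0 : ℂ) ∈ K)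
    {a b : ℝ} (ha : 0 ≤ a) (hab : a < b) :
    ∃ δ > 0, ∀ s ∈ Metric.thickening δ (segment ℝ (0 : ℂ) 1), ∀ z,
      suppFn K (s * z) + a * ‖s * z‖ ≤ suppFn K z + b * ‖z‖ := by
  obtain ⟨R, hR⟩ := hK.exists_norm_le
  have hR0 : 0 ≤ R := (norm_nonneg _).trans (hR 0 h0)
  refine ⟨(b - a) / (R + a + 1), div_pos (sub_pos.2 hab) (by positivity), fun s hs z => ?_⟩
  obtain ⟨_, ⟨r, t, hr0, ht0, hrt, rfl⟩, hst⟩ := Metric.mem_thickening_iff.1 hs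
  simp only [smul_zero, zero_add, Complex.real_smul, mul_one, dist_eq_norm] at hst
  set d := ‖s - t‖
  have htle : t ≤ 1 := by linarith
  have hd : (R + a) * d ≤ b - a := by
    rw [lt_div_iff₀ (by positivity)] at hst
    nlinarith [norm_nonneg (s - t)]
  have hs1 : ‖s‖ ≤ 1 + d :=
    calc ‖s‖ ≤ ‖(t : ℂ)‖ + ‖s - t‖ := norm_le_insert' _ _
      _ ≤ 1 + d := by rw [Complex.norm_of_nonneg ht0]; gcongr
  have hsupp : suppFn K (s * z) ≤ suppFn K z + R * (d * ‖z‖) :=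
    calc suppFn K (s * z) = suppFn K (t * z + (s - t) * z) := by ring_nf
      _ ≤ t * suppFn K z + R * (d * ‖z‖) := by
        rw [← norm_mul, ← suppFn_ofReal_mul K ht0]
        exact (suppFn_add_le hK ⟨0, h0⟩ _ _).trans
          (add_le_add_right (suppFn_le_mul_norm ⟨0, h0⟩ hR _) _)
      _ ≤ suppFn K z + R * (d * ‖z‖) := by
        gcongr
        exact mul_le_of_le_one_left (suppFn_nonneg hK h0 z) htle
  calc suppFn K (s * z) + a * ‖s * z‖
      ≤ suppFn K z + R * (d * ‖z‖) + a * ((1 + d) * ‖z‖) := by rw [norm_mul]; gcongr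
    _ = suppFn K z + ((R + a) * d + a) * ‖z‖ := by ring
    _ ≤ suppFn K z + b * ‖z‖ := by gcongr; linarith

end SupportFunction

section WeightedFunctions

variable {K : Set ℂ} {n : ℕ} {F : ℂ → ℂ}

/-- The weight `exp (-H_K z - |z| / n)` of the norm `‖·‖_{K,n}`. -/
noncomputable def expWeight (K : Set ℂ) (n : ℕ) (z : ℂ) : ℝ :=
  Real.exp (-(suppFn K z) - ‖z‖ / n)

open scoped Classical in
/-- The bounded continuous function `F · exp (-H_K - |·| / n)`, through which `Exp(K)` with the norm
`‖·‖_{K,n}` embeds isometrically into `ℂ →ᵇ ℂ`; the junk value is `0` when this product is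
unbounded or discontinuous. -/
noncomputable def weighted (K : Set ℂ) (n : ℕ) (F : ℂ → ℂ) : ℂ →ᵇ ℂ :=
  if h : ∃ b : ℂ →ᵇ ℂ, ∀ z, b z = F z * expWeight K n z then h.choose else 0

theorem norm_mul_expWeight (w : ℂ) (K : Set ℂ) (n : ℕ) (z : ℂ) :
    ‖w * expWeight K n z‖ = ‖w‖ * expWeight K n z := by
  have hpos : 0 ≤ expWeight K n z := (Real.exp_pos _).le
  rw [norm_mul, Complex.norm_of_nonneg hpos]

theorem continuous_expWeight (hK : Bornology.IsBounded K) (hne : K.Nonempty) (n : ℕ) :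
    Continuous (expWeight K n) :=
  Real.continuous_exp.comp
    ((continuous_suppFn hK hne).neg.sub (continuous_norm.div_const _))

theorem weighted_apply (hK : Bornology.IsBounded K) (hne : K.Nonempty) (hF : Continuous F)
    (hbdd : BddAbove (Set.range fun z => ‖F z‖ * expWeight K n z)) (z : ℂ) :
    weighted K n F z = F z * expWeight K n z := by
  obtain ⟨C, hC⟩ := hbdd
  have hex : ∃ b : ℂ →ᵇ ℂ, ∀ z, b z = F z * expWeight K n z := by
    refine ⟨.ofNormedAddCommGroup (fun z => F z * expWeight K n z)
      (hF.mul (continuous_ofReal.comp (continuous_expWeight hK hne n))) C fun w => ?_, fun _ => rfl⟩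
    exact (norm_mul_expWeight _ K n w).trans_le (hC (Set.mem_range_self w))
  rw [weighted, dif_pos hex]
  exact hex.choose_spec z

theorem weighted_apply_of_memExp (hK : Bornology.IsBounded K) (hne : K.Nonempty) (hn : 0 < n)
    (hF : MemExp K F) (z : ℂ) : weighted K n F z = F z * expWeight K n z :=
  weighted_apply hK hne hF.1.continuous (hF.2 n hn) z

theorem expNorm_eq_norm {b : ℂ →ᵇ ℂ} (hb : ∀ z, b z = F z * expWeight K n z) :
    expNorm K n F = ‖b‖ := by
  simp only [b.norm_eq_iSup_norm, hb, norm_mul_expWeight]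
  rfl

theorem memExp_pow (hK : Bornology.IsBounded K) (h0 : (0 : ℂ) ∈ K) (k : ℕ) :
    MemExp K (fun z => z ^ k) := by
  refine ⟨by fun_prop, fun n hn => ⟨k.factorial * n ^ k, Set.forall_mem_range.2 fun z => ?_⟩⟩
  have hpow : ‖z‖ ^ k ≤ k.factorial * n ^ k * Real.exp (‖z‖ / n) := by
    have hexp := Real.pow_div_factorial_le_exp (‖z‖ / n) (by positivity) k
    rwa [div_pow, div_div, div_le_iff₀ (by positivity), mul_comm, mul_comm ((n : ℝ) ^ k)] at hexp
  calc ‖z ^ k‖ * Real.exp (-(suppFn K z) - ‖z‖ / n)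
      ≤ k.factorial * n ^ k * Real.exp (‖z‖ / n) * Real.exp (-(‖z‖ / n)) := by
        rw [norm_pow]
        gcongr
        linarith [suppFn_nonneg hK h0 z]
    _ = k.factorial * n ^ k := by
        rw [mul_assoc, ← Real.exp_add, add_neg_cancel, Real.exp_zero, mul_one]

end WeightedFunctions

section DilationCurve

/-- An open connected set containing `0` and `1`, all of whose dilations `F ↦ F(s·)` are uniformly
bounded from `Exp(K)` to the weighted space at level `n`. -/
structure IsDilationDomain (K : Set ℂ) (n : ℕ) (U : Set ℂ) : Prop where
  isOpen : IsOpen U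
  isPreconnected : IsPreconnected U
  zero_mem : 0 ∈ U
  one_mem : 1 ∈ U
  exists_bound : ∀ F, MemExp K F → ∃ C, ∀ s ∈ U, ∀ z, ‖F (s * z)‖ * expWeight K n z ≤ C

/-- The curve `s ↦ F(s·)` of dilates of `F`, at level `n` of the weighted space. -/
noncomputable def dilationCurve (K : Set ℂ) (n : ℕ) (F : ℂ → ℂ) (s : ℂ) : ℂ →ᵇ ℂ :=
  weighted K n fun z => F (s * z)

theorem exists_isDilationDomain {K : Set ℂ} {n : ℕ} (hK : Bornology.IsBounded K)
    (h0 : (0 : ℂ) ∈ K) (hn : 0 < n) : ∃ U, IsDilationDomain K n U := by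
  have hlevel : 1 / (2 * n : ℝ) < 1 / n := by
    gcongr
    exact lt_two_mul_self (by exact_mod_cast hn)
  obtain ⟨δ, hδ, hle⟩ := exists_thickening_suppFn_mul_add_le hK h0 (by positivity) hlevel
  refine ⟨Metric.thickening δ (segment ℝ 0 1), Metric.isOpen_thickening,
    ((convex_segment _ _).thickening _).isPreconnected,
    Metric.self_subset_thickening hδ _ (left_mem_segment ℝ _ _),
    Metric.self_subset_thickening hδ _ (right_mem_segment ℝ _ _), fun F hF => ?_⟩
  obtain ⟨C, hC⟩ := hF.2 (2 * n) (by positivity)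
  refine ⟨C, fun s hs z =>
    (mul_le_mul_of_nonneg_left (Real.exp_le_exp.2 ?_) (norm_nonneg _)).trans (hC ⟨s * z, rfl⟩)⟩
  have hexponent := hle s hs z
  rw [one_div_mul_eq_div, one_div_mul_eq_div] at hexponent
  push_cast
  linarith

theorem dilationCurve_one (K : Set ℂ) (n : ℕ) (F : ℂ → ℂ) :
    dilationCurve K n F 1 = weighted K n F := by
  simp only [dilationCurve, one_mul]

variable {K : Set ℂ} {n : ℕ} {U : Set ℂ} {F : ℂ → ℂ}

theorem dilationCurve_apply (hK : Bornology.IsBounded K) (hne : K.Nonempty)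
    (hU : IsDilationDomain K n U) (hF : MemExp K F) {s : ℂ} (hs : s ∈ U) (z : ℂ) :
    dilationCurve K n F s z = F (s * z) * expWeight K n z := by
  obtain ⟨C, hC⟩ := hU.exists_bound F hF
  exact weighted_apply hK hne (hF.1.continuous.comp (continuous_const_mul s))
    ⟨C, Set.forall_mem_range.2 (hC s hs)⟩ z

theorem differentiableOn_dilationCurve (hK : Bornology.IsBounded K) (hne : K.Nonempty)
    (hU : IsDilationDomain K n U) (hF : MemExp K F) :
    DifferentiableOn ℂ (dilationCurve K n F) U := by
  obtain ⟨C, hC⟩ := hU.exists_bound F hF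
  refine differentiableOn_of_differentiableOn_eval hU.isOpen (fun s hs => ⟨C, ?_⟩) fun z => ?_
  · filter_upwards [hU.isOpen.mem_nhds hs] with t ht
    refine (BoundedContinuousFunction.norm_le_of_nonempty).2 fun z => ?_
    rw [dilationCurve_apply hK hne hU hF ht, norm_mul_expWeight]
    exact hC t ht z
  · have hdiff : Differentiable ℂ fun s => F (s * z) * expWeight K n z :=
      (hF.1.comp (differentiable_id.mul_const z)).mul_const _
    exact hdiff.differentiableOn.congr fun s hs => dilationCurve_apply hK hne hU hF hs z

theorem iteratedDeriv_dilationCurve_zero (hK : Bornology.IsBounded K) (h0 : (0 : ℂ) ∈ K)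
    (hn : 0 < n) (hU : IsDilationDomain K n U) (hF : MemExp K F) (k : ℕ) :
    iteratedDeriv k (dilationCurve K n F) 0 = iteratedDeriv k F 0 • weighted K n (· ^ k) := by
  have hU0 : U ∈ 𝓝 0 := hU.isOpen.mem_nhds hU.zero_mem
  have hsmooth : ContDiffAt ℂ k (dilationCurve K n F) 0 :=
    ((differentiableOn_dilationCurve hK ⟨0, h0⟩ hU hF).analyticAt hU0).contDiffAt
  ext z
  have heval : (fun s => dilationCurve K n F s z) =ᶠ[𝓝 0] fun s => F (z * s) * expWeight K n z := by
    filter_upwards [hU0] with s hs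
    rw [dilationCurve_apply hK ⟨0, h0⟩ hU hF hs, mul_comm s z]
  calc iteratedDeriv k (dilationCurve K n F) 0 z
      = iteratedDeriv k (fun s => dilationCurve K n F s z) 0 :=
        (iteratedDeriv_continuousLinearMap_comp
          (BoundedContinuousFunction.evalCLM ℂ z) hsmooth).symm
    _ = z ^ k * iteratedDeriv k F 0 * expWeight K n z := by
        rw [heval.iteratedDeriv_eq, iteratedDeriv_mul_const_field,
          iteratedDeriv_comp_const_mul hF.1.contDiff]
        simp only [mul_zero]
    _ = (iteratedDeriv k F 0 • weighted K n (· ^ k)) z := by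
        rw [BoundedContinuousFunction.smul_apply,
          weighted_apply_of_memExp hK ⟨0, h0⟩ hn (memExp_pow hK h0 k), smul_eq_mul]
        ring

end DilationCurve

section ClosedSpan

variable {K : Set ℂ} {n : ℕ} {f g : ℂ → ℂ} {A : Set ℂ}

theorem weighted_mem_of_forall_pow_mem (hK : Bornology.IsBounded K) (h0 : (0 : ℂ) ∈ K)
    (hn : 0 < n) {M : Submodule ℂ (ℂ →ᵇ ℂ)} (hM : IsClosed (M : Set (ℂ →ᵇ ℂ)))
    (hpow : ∀ k : ℕ, weighted K n (· ^ k) ∈ M) (hg : MemExp K g) : weighted K n g ∈ M := by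
  obtain ⟨U, hU⟩ := exists_isDilationDomain hK h0 hn
  have hcurve : AnalyticOnNhd ℂ (dilationCurve K n g) U :=
    (differentiableOn_dilationCurve hK ⟨0, h0⟩ hU hg).analyticOnNhd hU.isOpen
  rw [← dilationCurve_one]
  refine forall_mem_of_iteratedDeriv_mem hM hcurve hU.isPreconnected hU.zero_mem (fun k => ?_)
    1 hU.one_mem
  rw [iteratedDeriv_dilationCurve_zero hK h0 hn hU hg]
  exact M.smul_mem _ (hpow k)

theorem iteratedDeriv_comp_const_mul_zero {α : ℂ} (hf : Differentiable ℂ fun z => f (α * z))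
    (k : ℕ) : iteratedDeriv k (fun z => f (α * z)) 0 = α ^ k * iteratedDeriv k f 0 := by
  rcases eq_or_ne α 0 with rfl | hα
  · cases k with
    | zero => simp
    | succ k => simp [iteratedDeriv_const]
  · have hf' : Differentiable ℂ f := by
      simpa [Function.comp_def, mul_inv_cancel_left₀ hα] using
        hf.comp (differentiable_id.const_mul α⁻¹)
    rw [iteratedDeriv_comp_const_mul hf'.contDiff]
    simp only [mul_zero]

theorem exists_div_mem_of_accPt {a : ℂ} (ha : AccPt a (𝓟 A)) {U : Set ℂ} (hU : IsOpen U)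
    (hU0 : 0 ∈ U) (hU1 : 1 ∈ U) : ∃ α ∈ A, α ≠ 0 ∧ a / α ∈ U := by
  have hfreq := accPt_iff_frequently_nhdsNE.1 ha
  rcases eq_or_ne a 0 with rfl | ha0
  · obtain ⟨α, hα, hα0⟩ := (hfreq.and_eventually self_mem_nhdsWithin).exists
    exact ⟨α, hα, hα0, by rwa [zero_div]⟩
  · have hdiv : ∀ᶠ α in 𝓝 a, a / α ∈ U :=
      (continuousAt_const.div continuousAt_id ha0).eventually_mem
        (hU.mem_nhds (by simpa [div_self ha0] using hU1))
    obtain ⟨α, hα, hα0, hαU⟩ := (hfreq.and_eventually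
      (((eventually_ne_nhds ha0).and hdiv).filter_mono nhdsWithin_le_nhds)).exists
    exact ⟨α, hα, hα0, hαU⟩

theorem weighted_pow_mem_of_weighted_dilate_mem (hK : Bornology.IsBounded K) (h0 : (0 : ℂ) ∈ K)
    (hn : 0 < n) {M : Submodule ℂ (ℂ →ᵇ ℂ)} (hM : IsClosed (M : Set (ℂ →ᵇ ℂ))) {a : ℂ}
    (ha : AccPt a (𝓟 A)) (hA : ∀ α ∈ A, MemExp K fun z => f (α * z))
    (hmem : ∀ α ∈ A, weighted K n (fun z => f (α * z)) ∈ M) {k : ℕ}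
    (hk : iteratedDeriv k f 0 ≠ 0) : weighted K n (· ^ k) ∈ M := by
  obtain ⟨U, hU⟩ := exists_isDilationDomain hK h0 hn
  obtain ⟨α₀, hα₀A, hα₀, haU⟩ := exists_div_mem_of_accPt ha hU.isOpen hU.zero_mem hU.one_mem
  set Φ := dilationCurve K n fun z => f (α₀ * z) with hΦ
  have hanalytic : AnalyticOnNhd ℂ Φ U :=
    (differentiableOn_dilationCurve hK ⟨0, h0⟩ hU (hA α₀ hα₀A)).analyticOnNhd hU.isOpen
  have hdilate (α : ℂ) : Φ (α / α₀) = weighted K n fun z => f (α * z) := by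
    simp only [hΦ, dilationCurve, ← mul_assoc, mul_div_cancel₀ α hα₀]
  have hfreq : ∃ᶠ s in 𝓝[≠] (a / α₀), Φ s ∈ M := by
    have htendsto : Tendsto (· / α₀) (𝓝[≠] a) (𝓝[≠] (a / α₀)) :=
      ((hasDerivAt_id a).div_const α₀).tendsto_nhdsNE (one_div_ne_zero hα₀)
    refine htendsto.frequently ((accPt_iff_frequently_nhdsNE.1 ha).mono fun α hα => ?_)
    rw [hdilate]
    exact hmem α hα
  have hcurve := forall_mem_of_frequently_mem hM hanalytic hU.isPreconnected haU hfreq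
  have hderiv : iteratedDeriv k Φ 0 ∈ M :=
    iteratedDeriv_mem_of_eventually_mem hM (hanalytic 0 hU.zero_mem).contDiffAt
      ((hU.isOpen.eventually_mem hU.zero_mem).mono hcurve)
  rw [hΦ, iteratedDeriv_dilationCurve_zero hK h0 hn hU (hA α₀ hα₀A),
    iteratedDeriv_comp_const_mul_zero (hA α₀ hα₀A).1] at hderiv
  exact (M.smul_mem_iff (mul_ne_zero (pow_ne_zero k hα₀) hk)).1 hderiv

theorem exists_expNorm_sub_sum_lt (hK : Bornology.IsBounded K) (hne : K.Nonempty) (hn : 0 < n)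
    {ι : Type*} {A : Set ι} {F : ι → ℂ → ℂ} (hF : ∀ i ∈ A, MemExp K (F i)) (hg : MemExp K g)
    (hmem : weighted K n g ∈
      (Submodule.span ℂ ((fun i => weighted K n (F i)) '' A)).topologicalClosure)
    {ε : ℝ} (hε : 0 < ε) :
    ∃ (s : Finset ι) (coef : ι → ℂ), ↑s ⊆ A ∧
      expNorm K n (fun z => g z - ∑ i ∈ s, coef i * F i z) < ε := by
  obtain ⟨h, hh, hdist⟩ := Metric.mem_closure_iff.1 hmem ε hε
  obtain ⟨l, hl, rfl⟩ := (Finsupp.mem_span_image_iff_linearCombination ℂ).1 hh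
  have hlA : ↑l.support ⊆ A := (Finsupp.mem_supported ℂ l).1 hl
  refine ⟨l.support, l, hlA, ?_⟩
  rw [dist_eq_norm] at hdist
  rwa [expNorm_eq_norm (b := weighted K n g - _)]
  intro z
  simp only [BoundedContinuousFunction.sub_apply, Finsupp.linearCombination_apply, Finsupp.sum,
    BoundedContinuousFunction.sum_apply, BoundedContinuousFunction.smul_apply, smul_eq_mul,
    weighted_apply_of_memExp hK hne hn hg, sub_mul, Finset.sum_mul, mul_assoc]
  congr 1
  exact Finset.sum_congr rfl fun i hi => by
    rw [weighted_apply_of_memExp hK hne hn (hF i (hlA hi))]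

end ClosedSpan

section TaylorCoefficients

variable {K : Set ℂ} {n : ℕ}

/-- `Exp(K)` as a linear subspace of the functions `ℂ → ℂ`, for its closure under finite linear
combinations. -/
def expSpace (K : Set ℂ) : Submodule ℂ (ℂ → ℂ) where
  carrier := {F | MemExp K F}
  zero_mem' := ⟨differentiable_const 0, fun n _ => ⟨0, Set.forall_mem_range.2 fun z => by simp⟩⟩
  add_mem' := by
    intro F G hF hG
    refine ⟨hF.1.add hG.1, fun n hn => ?_⟩
    obtain ⟨B, hB⟩ := hF.2 n hn
    obtain ⟨C, hC⟩ := hG.2 n hn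
    refine ⟨B + C, Set.forall_mem_range.2 fun z => ?_⟩
    calc ‖F z + G z‖ * Real.exp (-(suppFn K z) - ‖z‖ / n)
        ≤ (‖F z‖ + ‖G z‖) * Real.exp (-(suppFn K z) - ‖z‖ / n) := by gcongr; exact norm_add_le _ _
      _ ≤ B + C := by rw [add_mul]; exact add_le_add (hB ⟨z, rfl⟩) (hC ⟨z, rfl⟩)
  smul_mem' := by
    intro c F hF
    refine ⟨hF.1.const_smul c, fun n hn => ?_⟩
    obtain ⟨B, hB⟩ := hF.2 n hn
    refine ⟨‖c‖ * B, Set.forall_mem_range.2 fun z => ?_⟩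
    rw [Pi.smul_apply, norm_smul, mul_assoc]
    exact mul_le_mul_of_nonneg_left (hB ⟨z, rfl⟩) (norm_nonneg c)

theorem memExp_sub_sum {ι : Type*} {s : Finset ι} {F : ι → ℂ → ℂ} {g : ℂ → ℂ}
    (hF : ∀ i ∈ s, MemExp K (F i)) (hg : MemExp K g) (coef : ι → ℂ) :
    MemExp K fun z => g z - ∑ i ∈ s, coef i * F i z := by
  have hmem : g - ∑ i ∈ s, coef i • F i ∈ expSpace K :=
    sub_mem hg (sum_mem fun i hi => (expSpace K).smul_mem _ (hF i hi))
  convert! hmem using 2 with z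
  simp only [Pi.sub_apply, Finset.sum_apply, Pi.smul_apply, smul_eq_mul]

theorem exists_norm_iteratedDeriv_zero_le_expNorm (hK : Bornology.IsBounded K)
    (hne : K.Nonempty) (hn : 0 < n) (k : ℕ) :
    ∃ C > 0, ∀ F, MemExp K F → ‖iteratedDeriv k F 0‖ ≤ C * expNorm K n F := by
  obtain ⟨R, hR⟩ := hK.exists_norm_le
  refine ⟨k.factorial * Real.exp (R + 1 / n), by positivity, fun F hF => ?_⟩
  have hsphere : ∀ z ∈ Metric.sphere (0 : ℂ) 1, ‖F z‖ ≤ Real.exp (R + 1 / n) * expNorm K n F := by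
    intro z hz
    rw [mem_sphere_zero_iff_norm] at hz
    have hsupp : suppFn K z ≤ R := by simpa [hz] using suppFn_le_mul_norm hne hR z
    have hz' : ‖F z‖ * Real.exp (-(suppFn K z) - ‖z‖ / n) ≤ expNorm K n F :=
      le_csSup (hF.2 n hn) ⟨z, rfl⟩
    have hcancel : suppFn K z + ‖z‖ / n + (-(suppFn K z) - ‖z‖ / n) = 0 := by ring
    calc ‖F z‖ = Real.exp (suppFn K z + ‖z‖ / n) *
          (‖F z‖ * Real.exp (-(suppFn K z) - ‖z‖ / n)) := by
          rw [mul_left_comm, ← Real.exp_add, hcancel, Real.exp_zero, mul_one]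
      _ ≤ Real.exp (R + 1 / n) * expNorm K n F := by
          rw [hz] at hz' ⊢
          gcongr
  calc ‖iteratedDeriv k F 0‖
      ≤ k.factorial * (Real.exp (R + 1 / n) * expNorm K n F) / 1 ^ k :=
        Complex.norm_iteratedDeriv_le_of_forall_mem_sphere_norm_le k one_pos hF.1.diffContOnCl
          hsphere
    _ = k.factorial * Real.exp (R + 1 / n) * expNorm K n F := by
        rw [one_pow, div_one, mul_assoc]

theorem iteratedDeriv_zero_eq_zero_of_forall_approx (hK : Bornology.IsBounded K)
    (hne : K.Nonempty) (hn : 0 < n) {ι : Type*} {A : Set ι} {F : ι → ℂ → ℂ} {g : ℂ → ℂ} {k : ℕ}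
    (hF : ∀ i ∈ A, MemExp K (F i)) (hzero : ∀ i ∈ A, iteratedDeriv k (F i) 0 = 0)
    (hg : MemExp K g)
    (happrox : ∀ ε > (0 : ℝ), ∃ (s : Finset ι) (coef : ι → ℂ), ↑s ⊆ A ∧
      expNorm K n (fun z => g z - ∑ i ∈ s, coef i * F i z) < ε) :
    iteratedDeriv k g 0 = 0 := by
  obtain ⟨C, hC, hle⟩ := exists_norm_iteratedDeriv_zero_le_expNorm hK hne hn k
  refine norm_le_zero_iff.1 (le_of_forall_pos_lt_add fun ε hε => ?_)
  obtain ⟨s, coef, hsA, hlt⟩ := happrox (ε / C) (div_pos hε hC)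
  have hsmooth : ∀ i ∈ s, ContDiffAt ℂ k (fun z => coef i * F i z) 0 := fun i hi =>
    ((hF i (hsA hi)).1.const_mul (coef i)).contDiff.contDiffAt
  have hderiv : iteratedDeriv k (fun z => g z - ∑ i ∈ s, coef i * F i z) 0 =
      iteratedDeriv k g 0 := by
    rw [iteratedDeriv_fun_sub hg.1.contDiff.contDiffAt (ContDiffAt.sum hsmooth),
      iteratedDeriv_fun_sum hsmooth, sub_eq_self]
    refine Finset.sum_eq_zero fun i hi => ?_
    rw [iteratedDeriv_const_mul_field, hzero i (hsA hi), mul_zero]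
  calc ‖iteratedDeriv k g 0‖
      ≤ C * expNorm K n (fun z => g z - ∑ i ∈ s, coef i * F i z) := by
        rw [← hderiv]
        exact hle _ (memExp_sub_sum (fun i hi => hF i (hsA hi)) hg coef)
    _ < C * (ε / C) := by gcongr
    _ = 0 + ε := by rw [mul_div_cancel₀ ε hC.ne', zero_add]

end TaylorCoefficients

theorem stmt7_general (f : ℂ → ℂ) {K : Set ℂ} (hK : Bornology.IsBounded K) (h0 : (0 : ℂ) ∈ K)
    {A : Set ℂ} {a : ℂ} (ha : AccPt a (𝓟 A)) (hA : ∀ α ∈ A, MemExp K (fun z => f (α * z))) :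
    (∀ g : ℂ → ℂ, MemExp K g → ∀ n : ℕ, 0 < n → ∀ ε > (0 : ℝ),
        ∃ (s : Finset ℂ) (coef : ℂ → ℂ), ↑s ⊆ A ∧
          expNorm K n (fun z => g z - ∑ α ∈ s, coef α * f (α * z)) < ε) ↔
      (∀ m : ℕ, iteratedDeriv m f 0 ≠ 0) := by
  constructor
  · intro hdense m hm
    have hzero : ∀ α ∈ A, iteratedDeriv m (fun z => f (α * z)) 0 = 0 := fun α hα => by
      rw [iteratedDeriv_comp_const_mul_zero (hA α hα).1, hm, mul_zero]
    have hpow : iteratedDeriv m (fun z : ℂ => z ^ m) 0 = 0 :=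
      iteratedDeriv_zero_eq_zero_of_forall_approx hK ⟨0, h0⟩ one_pos hA hzero
        (memExp_pow hK h0 m) (hdense _ (memExp_pow hK h0 m) 1 one_pos)
    rw [iteratedDeriv_fun_pow_zero] at hpow
    simp [m.factorial_ne_zero] at hpow
  · intro hderiv g hg n hn ε hε
    set V := Submodule.span ℂ ((fun α => weighted K n fun z => f (α * z)) '' A)
    have hV : IsClosed (V.topologicalClosure : Set (ℂ →ᵇ ℂ)) := V.isClosed_topologicalClosure
    have hdilate : ∀ α ∈ A, weighted K n (fun z => f (α * z)) ∈ V.topologicalClosure :=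
      fun α hα => V.le_topologicalClosure (Submodule.subset_span (Set.mem_image_of_mem _ hα))
    have hpow (k : ℕ) : weighted K n (· ^ k) ∈ V.topologicalClosure :=
      weighted_pow_mem_of_weighted_dilate_mem hK h0 hn hV ha hA hdilate (hderiv k)
    exact exists_expNorm_sub_sum_lt hK ⟨0, h0⟩ hn hA hg
      (weighted_mem_of_forall_pow_mem hK h0 hn hV hpow hg) hε

/-- **Lemma (density of dilates).** Let `f` be entire of exponential type, `K` compact
convex with `0 ∈ K`, and `A` a bounded infinite set with `f(α·) ∈ Exp(K)` for all
`α ∈ A`. Then `span {f(α·) : α ∈ A}` is dense in `Exp(K)` iff all Taylor coefficients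
of `f` at `0` are nonzero. -/
theorem stmt7 (f : ℂ → ℂ) (hf : ExpType f)
    (K : Set ℂ) (hKc : IsCompact K) (hKconv : Convex ℝ K) (h0 : (0 : ℂ) ∈ K)
    (A : Set ℂ) (hAb : Bornology.IsBounded A) (hAinf : A.Infinite)
    (hA : ∀ α ∈ A, MemExp K (fun z => f (α * z))) :
    (∀ g : ℂ → ℂ, MemExp K g → ∀ n : ℕ, 0 < n → ∀ ε > (0 : ℝ),
        ∃ (s : Finset ℂ) (coef : ℂ → ℂ), ↑s ⊆ A ∧
          expNorm K n (fun z => g z - ∑ α ∈ s, coef α * f (α * z)) < ε) ↔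
      (∀ m : ℕ, iteratedDeriv m f 0 ≠ 0) := by
  obtain ⟨a, -, ha⟩ := hAinf.exists_accPt_of_subset_isCompact hAb.isCompact_closure subset_closure
  exact stmt7_general f hKc.isBounded h0 ha hA
end

section
/- Let a > 0 and b ∈ ℝ. Then there exists an entire function f of exponential type that is frequently hypercyclic for T₁ on H(ℂ) and whose indicator function satisfies h_f(θ) ≤ −b·sin(θ) + a·|sin(θ)| for all θ ∈ [−π, π]. -/
open Filter Complex

/-!
For `b ∈ ℝ` and `a > 0`, the entire functions decaying like a power of `1 / (1 + |z|)` relative to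
`exp (-b Im z + a |Im z|)` are dense in the space of all entire functions: multiply a polynomial
`p z` by a power of `sin (δ z) / (δ z)` with small `δ`, and tilt by `exp (i b z)`. Place translates
of a dense sequence `ψ e` of such functions along disjoint sets of integers of positive lower
density, in such a way that a translate of `ψ e` is at distance at least `e` from all the others.
Their sum `F` is then close to `ψ e` around each integer of the `e`-th set, hence frequently
hypercyclic, and it grows like the weight up to a polynomial factor, which bounds its indicator from
above.

The indicator of `F` might still be `-∞` on some ray, where the real-valued `limsup` is `0`. So
build `F` with `a / 2` in place of `a`, and add `exp (i b z) sin (a z) / (a z)`: the sum is still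
frequently hypercyclic, because the translates of the new term along the real axis tend to `0`, and
off the real axis the new term dominates `F`, so the indicator is finite there.
-/

open Set
open scoped Polynomial Topology

/-! ### Weighted bounds -/

/-- The weight `y ↦ exp (-b y + a |y|)` on the imaginary part `y = Im z`. It is the size of
`exp (i b z)` times a function of exponential type `a` bounded on the real axis, and the exponent
is the indicator `-b sin θ + a |sin θ|` at `y = sin θ`. -/
noncomputable def tiltedWeight (b a y : ℝ) : ℝ :=
  Real.exp (-b * y + a * |y|)

lemma tiltedWeight_pos (b a y : ℝ) : 0 < tiltedWeight b a y :=
  Real.exp_pos _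

lemma continuous_tiltedWeight (b a : ℝ) : Continuous (tiltedWeight b a) := by
  unfold tiltedWeight
  fun_prop

lemma tiltedWeight_mono (b : ℝ) {a a' : ℝ} (h : a ≤ a') (y : ℝ) :
    tiltedWeight b a y ≤ tiltedWeight b a' y := by
  unfold tiltedWeight
  gcongr

lemma tiltedWeight_zero_pow (a y : ℝ) (n : ℕ) :
    tiltedWeight 0 a y ^ n = tiltedWeight 0 (n * a) y := by
  unfold tiltedWeight
  rw [← Real.exp_nat_mul]
  ring_nf

lemma norm_cexp_mul_tiltedWeight (b c a : ℝ) (z : ℂ) :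
    ‖Complex.exp (I * c * z)‖ * tiltedWeight b a z.im = tiltedWeight (b + c) a z.im := by
  unfold tiltedWeight
  rw [Complex.norm_exp, ← Real.exp_add]
  congr 1
  simp only [mul_re, I_re, I_im, mul_im, ofReal_re, ofReal_im]
  ring

/-- `ψ` is bounded by `C w(Im z) (1 + |z|)⁻ᵐ`: the decay, uniform in horizontal strips on which
`w` is bounded, that makes sums of widely spaced horizontal translates converge. -/
def DecayBound (w : ℝ → ℝ) (m : ℕ) (C : ℝ) (ψ : ℂ → ℂ) : Prop :=
  ∀ z, ‖ψ z‖ ≤ C * (w z.im / (1 + ‖z‖) ^ m)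

/-- `f` is bounded by `K (1 + |z|)ᵐ w(Im z)`, that is, by `w(Im z)` up to a polynomial factor, which
does not affect the indicator. -/
def GrowthBound (w : ℝ → ℝ) (m : ℕ) (K : ℝ) (f : ℂ → ℂ) : Prop :=
  ∀ z, ‖f z‖ ≤ K * ((1 + ‖z‖) ^ m * w z.im)

lemma one_add_norm_sub_le {E : Type*} [SeminormedAddGroup E] (u v : E) :
    1 + ‖u - v‖ ≤ (1 + ‖u‖) * (1 + ‖v‖) := by
  nlinarith [norm_sub_le u v, norm_nonneg u, norm_nonneg v]

lemma norm_eval_le_sum_norm_coeff_mul_pow {R : Type*} [NormedField R] (p : R[X]) (z : R) :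
    ‖p.eval z‖ ≤
      (∑ k ∈ Finset.range (p.natDegree + 1), ‖p.coeff k‖) * (1 + ‖z‖) ^ p.natDegree := by
  rw [p.eval_eq_sum_range, Finset.sum_mul]
  refine norm_sum_le_of_le _ fun k hk => ?_
  have hz := norm_nonneg z
  rw [norm_mul, norm_pow]
  gcongr
  calc ‖z‖ ^ k ≤ (1 + ‖z‖) ^ k := by gcongr; linarith
    _ ≤ (1 + ‖z‖) ^ p.natDegree :=
      pow_le_pow_right₀ (by linarith) (Finset.mem_range_succ_iff.1 hk)

namespace DecayBound

variable {w w' : ℝ → ℝ} {m : ℕ} {C : ℝ} {ψ : ℂ → ℂ}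

lemma mul_weight_nonneg (h : DecayBound w m C ψ) (y : ℝ) : 0 ≤ C * w y := by
  have hpos : 0 < (1 + ‖(y * I : ℂ)‖) ^ m := by positivity
  have hdiv := (norm_nonneg _).trans (h (y * I))
  rw [← mul_div_assoc, le_div_iff₀ hpos, zero_mul] at hdiv
  simpa using hdiv

lemma weight_nonneg (h : DecayBound w m C ψ) (hC : 0 < C) (y : ℝ) : 0 ≤ w y :=
  nonneg_of_mul_nonneg_right (h.mul_weight_nonneg y) hC

lemma mono_weight (h : DecayBound w m C ψ) (hC : 0 ≤ C) (hw : ∀ y, w y ≤ w' y) :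
    DecayBound w' m C ψ := by
  intro z
  refine (h z).trans ?_
  gcongr
  exact hw _

lemma pow (h : DecayBound w m C ψ) (n : ℕ) :
    DecayBound (fun y => w y ^ n) (m * n) (C ^ n) (fun z => ψ z ^ n) := by
  intro z
  calc ‖ψ z ^ n‖ = ‖ψ z‖ ^ n := norm_pow _ _
    _ ≤ (C * (w z.im / (1 + ‖z‖) ^ m)) ^ n := by gcongr; exact h z
    _ = C ^ n * (w z.im ^ n / (1 + ‖z‖) ^ (m * n)) := by rw [mul_pow, div_pow, pow_mul]

lemma polynomial_mul (p : ℂ[X]) (h : DecayBound w (p.natDegree + m) C ψ) :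
    DecayBound w m ((∑ k ∈ Finset.range (p.natDegree + 1), ‖p.coeff k‖) * C)
      (fun z => p.eval z * ψ z) := by
  intro z
  rw [norm_mul]
  refine (mul_le_mul (norm_eval_le_sum_norm_coeff_mul_pow p z) (h z) (norm_nonneg _)
    (by positivity)).trans_eq ?_
  rw [pow_add]
  field_simp

lemma cexp_mul {b a : ℝ} (h : DecayBound (tiltedWeight b a) m C ψ) (c : ℝ) :
    DecayBound (tiltedWeight (b + c) a) m C (fun z => Complex.exp (I * c * z) * ψ z) := by
  intro z
  rw [norm_mul, ← norm_cexp_mul_tiltedWeight, mul_div_assoc, mul_left_comm]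
  gcongr
  exact h z

lemma norm_apply_add_ofReal_le (h : DecayBound w m C ψ) (z : ℂ) (x : ℝ) :
    ‖ψ (z + x)‖ ≤ C * w z.im * ((1 + ‖z‖) ^ m / (1 + |x|) ^ m) := by
  have hpeetre : 1 + |x| ≤ (1 + ‖z + x‖) * (1 + ‖z‖) := by
    simpa using one_add_norm_sub_le (z + x) z
  have him : (z + x).im = z.im := by simp
  calc ‖ψ (z + x)‖ ≤ C * w z.im * (1 / (1 + ‖z + x‖) ^ m) := by
        simpa only [him, mul_one_div, mul_div_assoc] using h (z + x)
    _ ≤ C * w z.im * ((1 + ‖z‖) ^ m / (1 + |x|) ^ m) := by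
        refine mul_le_mul_of_nonneg_left ?_ (h.mul_weight_nonneg _)
        rw [div_le_div_iff₀ (by positivity) (by positivity), one_mul, ← mul_pow,
          mul_comm (1 + ‖z‖)]
        gcongr

lemma growthBound (h : DecayBound w m C ψ) (n : ℕ) : GrowthBound w n C ψ := by
  intro z
  have hz : 1 ≤ 1 + ‖z‖ := by linarith [norm_nonneg z]
  calc ‖ψ z‖ ≤ C * w z.im / (1 + ‖z‖) ^ m := by simpa only [mul_div_assoc] using h z
    _ ≤ C * w z.im := div_le_self (h.mul_weight_nonneg _) (one_le_pow₀ hz)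
    _ ≤ C * w z.im * (1 + ‖z‖) ^ n := le_mul_of_one_le_right (h.mul_weight_nonneg _)
      (one_le_pow₀ hz)
    _ = C * ((1 + ‖z‖) ^ n * w z.im) := by ring

lemma tendstoUniformlyOn_translates (h : DecayBound w m C ψ) (hm : m ≠ 0) (hw : Continuous w)
    (R : ℝ) :
    TendstoUniformlyOn (fun (k : ℕ) z => ψ (z + k)) 0 atTop (Metric.closedBall 0 R) := by
  obtain ⟨B, hB⟩ := (isCompact_closedBall (0 : ℂ) R).exists_bound_of_continuousOn
    (f := fun z => C * w z.im * (1 + ‖z‖) ^ m) (by fun_prop)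
  have hlim : Tendsto (fun k : ℕ => B / (1 + (k : ℝ)) ^ m) atTop (𝓝 0) :=
    tendsto_const_nhds.div_atTop <| (tendsto_pow_atTop hm).comp <|
      tendsto_atTop_add_const_left _ _ tendsto_natCast_atTop_atTop
  rw [Metric.tendstoUniformlyOn_iff]
  intro ε hε
  filter_upwards [hlim.eventually_lt_const hε] with k hk z hz
  rw [Pi.zero_apply, dist_zero_left]
  calc ‖ψ (z + k)‖ ≤ C * w z.im * (1 + ‖z‖) ^ m / (1 + (k : ℝ)) ^ m := by
        simpa [mul_div_assoc] using h.norm_apply_add_ofReal_le z k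
    _ ≤ B / (1 + (k : ℝ)) ^ m := by
        gcongr
        exact (le_abs_self _).trans (hB z hz)
    _ < ε := hk

end DecayBound

namespace GrowthBound

variable {w w' : ℝ → ℝ} {m : ℕ} {K K' : ℝ} {f g : ℂ → ℂ}

lemma add (hf : GrowthBound w m K f) (hg : GrowthBound w m K' g) :
    GrowthBound w m (K + K') (f + g) := fun z =>
  (norm_add_le_of_le (hf z) (hg z)).trans_eq (add_mul _ _ _).symm

lemma mono_weight (hf : GrowthBound w m K f) (hK : 0 ≤ K) (hw : ∀ y, w y ≤ w' y) :
    GrowthBound w' m K f := by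
  intro z
  refine (hf z).trans ?_
  gcongr
  exact hw _

end GrowthBound

/-! ### The entire function `sin z / z` -/

lemma norm_sin_le_exp_abs_im (z : ℂ) : ‖Complex.sin z‖ ≤ Real.exp |z.im| := by
  have hneg : ‖Complex.exp (-z * I)‖ ≤ Real.exp |z.im| := by
    simpa [Complex.norm_exp] using le_abs_self z.im
  have hpos : ‖Complex.exp (z * I)‖ ≤ Real.exp |z.im| := by
    simpa [Complex.norm_exp] using neg_le_abs z.im
  have hsub := norm_sub_le_of_le hneg hpos
  simp only [Complex.sin, norm_div, norm_mul, Complex.norm_I, Complex.norm_ofNat]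
  linarith

lemma exp_abs_im_sub_one_div_two_le_norm_sin (z : ℂ) :
    (Real.exp |z.im| - 1) / 2 ≤ ‖Complex.sin z‖ := by
  have hneg : ‖Complex.exp (-z * I)‖ = Real.exp z.im := by simp [Complex.norm_exp]
  have hpos : ‖Complex.exp (z * I)‖ = Real.exp (-z.im) := by simp [Complex.norm_exp]
  have hsub := abs_norm_sub_norm_le (Complex.exp (-z * I)) (Complex.exp (z * I))
  rw [hneg, hpos, abs_le] at hsub
  simp only [Complex.sin, norm_div, norm_mul, Complex.norm_I, Complex.norm_ofNat]
  rcases le_total 0 z.im with h | h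
  · have : Real.exp (-z.im) ≤ 1 := Real.exp_le_one_iff.2 (by linarith)
    rw [abs_of_nonneg h]
    linarith
  · have : Real.exp z.im ≤ 1 := Real.exp_le_one_iff.2 h
    rw [abs_of_nonpos h]
    linarith

/-- The entire function `sin z / z`, with value `1` at `0`. Powers of `csinc (δ z)` damp polynomials
on horizontal strips at the cost of a small exponential type. -/
noncomputable def csinc : ℂ → ℂ :=
  dslope Complex.sin 0

@[simp]
lemma csinc_zero : csinc 0 = 1 := by
  simp [csinc, dslope_same]

lemma mul_csinc (z : ℂ) : z * csinc z = Complex.sin z := by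
  simpa [csinc] using sub_smul_dslope Complex.sin 0 z

@[fun_prop]
lemma differentiable_csinc : Differentiable ℂ csinc := by
  rw [← differentiableOn_univ, csinc, Complex.differentiableOn_dslope univ_mem]
  exact Complex.differentiable_sin.differentiableOn

@[fun_prop]
lemma continuous_csinc : Continuous csinc :=
  differentiable_csinc.continuous

lemma exists_decayBound_csinc {a : ℝ} (ha : 0 < a) :
    ∃ C > 0, DecayBound (tiltedWeight 0 a) 1 C (fun z => csinc (a * z)) := by
  obtain ⟨M, hM⟩ := (isCompact_closedBall (0 : ℂ) 1).exists_bound_of_continuousOn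
    (f := fun z => csinc (a * z)) (by fun_prop)
  have hM0 : 0 ≤ M := (norm_nonneg _).trans (hM 0 (by simp))
  refine ⟨M + 2 / a, by positivity, fun z => ?_⟩
  have hweight : tiltedWeight 0 a z.im = Real.exp (a * |z.im|) := by simp [tiltedWeight]
  have hexp : 1 ≤ Real.exp (a * |z.im|) := Real.one_le_exp (by positivity)
  have hmul : ‖z‖ * ‖csinc (a * z)‖ ≤ 1 / a * Real.exp (a * |z.im|) := by
    have hsin := norm_sin_le_exp_abs_im (a * z)
    rw [← mul_csinc, norm_mul, norm_mul, Complex.norm_real, Real.norm_of_nonneg ha.le,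
      im_ofReal_mul, abs_mul, abs_of_pos ha, mul_assoc] at hsin
    rwa [one_div_mul_eq_div, le_div_iff₀' ha]
  have hself : ‖csinc (a * z)‖ ≤ (M + 1 / a) * Real.exp (a * |z.im|) := by
    rcases le_total ‖z‖ 1 with h | h
    · calc ‖csinc (a * z)‖ ≤ M := hM z (by simpa using h)
        _ ≤ M + 1 / a := by simp [ha.le]
        _ ≤ (M + 1 / a) * Real.exp (a * |z.im|) := le_mul_of_one_le_right (by positivity) hexp
    · calc ‖csinc (a * z)‖ ≤ ‖z‖ * ‖csinc (a * z)‖ := le_mul_of_one_le_left (norm_nonneg _) h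
        _ ≤ 1 / a * Real.exp (a * |z.im|) := hmul
        _ ≤ (M + 1 / a) * Real.exp (a * |z.im|) := by gcongr; linarith
  rw [hweight, pow_one, ← mul_div_assoc, le_div_iff₀ (by positivity)]
  linear_combination hmul + hself

/-! ### Density of the decaying entire functions -/

/-- The entire functions satisfying `DecayBound w m C` for some `C`. Entire functions are placed in
`C(ℂ, ℂ)`, whose compact-open topology is the topology of locally uniform convergence. -/
def decayingFunctions (w : ℝ → ℝ) (m : ℕ) : Set C(ℂ, ℂ) :=
  {ψ | Differentiable ℂ ψ ∧ ∃ C, DecayBound w m C ψ}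

lemma mem_closure_range_toContinuousMap {g : C(ℂ, ℂ)} (hg : Differentiable ℂ g) :
    g ∈ closure (range (Polynomial.toContinuousMap : ℂ[X] → C(ℂ, ℂ))) := by
  set p := cauchyPowerSeries g 0 ((1 : NNReal) : ℝ)
  let P : ℕ → ℂ[X] := fun n => ∑ k ∈ Finset.range n, Polynomial.monomial k (p.coeff k)
  have hP : ∀ n, ⇑(P n).toContinuousMap = p.partialSum n := by
    intro n
    ext z
    simp [P, FormalMultilinearSeries.partialSum, Polynomial.eval_finsetSum, mul_comm]
  have hlim : TendstoLocallyUniformly p.partialSum g atTop := by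
    have hps : HasFPowerSeriesOnBall g p 0 ⊤ := hg.hasFPowerSeriesOnBall 0 one_pos
    simpa [← tendstoLocallyUniformlyOn_univ] using hps.tendstoLocallyUniformlyOn
  refine mem_closure_of_tendsto (f := fun n => (P n).toContinuousMap) (b := atTop) ?_
    (Eventually.of_forall fun n => mem_range_self _)
  rw [ContinuousMap.tendsto_iff_tendstoLocallyUniformly]
  simpa only [hP] using hlim

lemma toContinuousMap_mem_closure_decayingFunctions {a : ℝ} (ha : 0 < a) (m : ℕ) (p : ℂ[X]) :
    p.toContinuousMap ∈ closure (decayingFunctions (tiltedWeight 0 a) m) := by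
  set n := p.natDegree + m
  let F : C(ℝ × ℂ, ℂ) := ⟨fun x => p.eval x.2 * csinc (x.1 * x.2) ^ n, by fun_prop⟩
  have hF0 : F.curry 0 = p.toContinuousMap := by
    ext z
    simp [F]
  have hlim : Tendsto F.curry (𝓝[>] 0) (𝓝 p.toContinuousMap) :=
    hF0 ▸ (F.curry.continuous.tendsto 0).mono_left nhdsWithin_le_nhds
  have hsmall : ∀ᶠ δ : ℝ in 𝓝[>] 0, n * δ < a := by
    refine nhdsWithin_le_nhds ((continuous_const.mul continuous_id).tendsto' _ _ ?_
      |>.eventually_lt_const ha)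
    simp
  refine mem_closure_of_tendsto hlim ?_
  filter_upwards [hsmall, self_mem_nhdsWithin] with δ hδ hδ0
  obtain ⟨C, hC, hdecay⟩ := exists_decayBound_csinc (mem_Ioi.1 hδ0)
  have hpow : DecayBound (tiltedWeight 0 a) n (C ^ n) (fun z => csinc (δ * z) ^ n) := by
    simpa only [one_mul] using (hdecay.pow n).mono_weight (by positivity) fun y =>
      (tiltedWeight_zero_pow δ y n).trans_le (tiltedWeight_mono 0 hδ.le y)
  have hdiff : Differentiable ℂ fun z => p.eval z * csinc (δ * z) ^ n := by fun_prop
  exact ⟨hdiff, _, hpow.polynomial_mul p⟩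

lemma mem_closure_decayingFunctions (b : ℝ) {a : ℝ} (ha : 0 < a) (m : ℕ) {g : C(ℂ, ℂ)}
    (hg : Differentiable ℂ g) : g ∈ closure (decayingFunctions (tiltedWeight b a) m) := by
  let E : ℝ → C(ℂ, ℂ) := fun c => ⟨fun z => Complex.exp (I * c * z), by fun_prop⟩
  have hE : ∀ c, Differentiable ℂ (E c) := fun c => by
    change Differentiable ℂ fun z : ℂ => Complex.exp (I * c * z)
    fun_prop
  have huntilted : E (-b) * g ∈ closure (decayingFunctions (tiltedWeight 0 a) m) :=
    closure_minimal (range_subset_iff.2 (toContinuousMap_mem_closure_decayingFunctions ha m))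
      isClosed_closure (mem_closure_range_toContinuousMap ((hE (-b)).mul hg))
  have hinv : E b * (E (-b) * g) = g := by
    ext z
    simp [E, ← mul_assoc, ← Complex.exp_add]
  rw [← hinv]
  refine map_mem_closure (continuous_const.mul continuous_id) huntilted ?_
  rintro ψ ⟨hψ, C, hC⟩
  have htilted := hC.cexp_mul b
  rw [zero_add] at htilted
  exact ⟨(hE b).mul hψ, _, htilted⟩

lemma exists_seq_subset_closure_range {X : Type*} [TopologicalSpace X]
    [SecondCountableTopology X] {S : Set X} (hS : S.Nonempty) :
    ∃ d : ℕ → X, (∀ n, d n ∈ S) ∧ S ⊆ closure (range d) := by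
  have := hS.to_subtype
  refine ⟨fun n => TopologicalSpace.denseSeq S n, fun n => Subtype.coe_prop _, ?_⟩
  simpa [range_comp'] using
    Subtype.dense_iff.1 (TopologicalSpace.denseRange_denseSeq S)

-- The `n`-th element of a dense sequence is repeated at the indices `e = Nat.pair n k`, and
-- replaced by `0` until `e` exceeds its decay constant.
lemma exists_seq_decayBound_natCast {w : ℝ → ℝ} {m : ℕ} (hw : ∀ y, 0 ≤ w y) :
    ∃ ψ : ℕ → C(ℂ, ℂ), (∀ e, Differentiable ℂ (ψ e)) ∧ (∀ e : ℕ, DecayBound w m e (ψ e)) ∧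
      ∀ g ∈ closure (decayingFunctions w m), MapClusterPt g atTop ψ := by
  classical
  have hzero : (0 : C(ℂ, ℂ)) ∈ decayingFunctions w m :=
    ⟨differentiable_const 0, 0, fun z => by simp⟩
  obtain ⟨d, hd, hdense⟩ := exists_seq_subset_closure_range ⟨0, hzero⟩
  choose hdiff C hC using hd
  have hnonneg : ∀ (e : ℕ) (z : ℂ), 0 ≤ (e : ℝ) * (w z.im / (1 + ‖z‖) ^ m) := fun e z =>
    have := hw z.im
    by positivity
  refine ⟨fun e => if C e.unpair.1 ≤ e then d e.unpair.1 else 0, fun e => ?_, fun e z => ?_,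
    fun g hg => mapClusterPt_iff_frequently.2 fun s hs => frequently_atTop.2 fun M => ?_⟩
  · dsimp only
    split_ifs
    exacts [hdiff _, differentiable_const 0]
  · dsimp only
    split_ifs with h
    · refine (hC _ z).trans ?_
      have := hw z.im
      gcongr
    · simpa using hnonneg e z
  · obtain ⟨_, hs, n, rfl⟩ :=
      mem_closure_iff_nhds.1 (closure_minimal hdense isClosed_closure hg) s hs
    obtain ⟨N, hN⟩ := exists_nat_ge (C n)
    have hle : max M N ≤ Nat.pair n (max M N) := Nat.right_le_pair _ _
    have hC' : C n ≤ Nat.pair n (max M N) :=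
      hN.trans (by exact_mod_cast (le_max_right _ _).trans hle)
    exact ⟨Nat.pair n (max M N), (le_max_left _ _).trans hle, by simpa [hC'] using hs⟩

/-! ### Separated sets of integers of positive lower density -/

/-- Centres of consecutive slots: the slot of `i` extends by `padicValNat 2 i` to both sides of
`slot i`, and is one away from the next. Since `padicValNat 2` takes each value `e` on an arithmetic
progression, the set of the `slot i` with `padicValNat 2 i = e` has positive lower density. -/
def slot (i : ℕ) : ℕ :=
  i + padicValNat 2 i + 2 * ∑ t ∈ Finset.range i, padicValNat 2 t

lemma slot_zero : slot 0 = 0 := by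
  simp [slot]

lemma sum_padicValNat_eq_padicValNat_factorial (p : ℕ) [Fact p.Prime] (n : ℕ) :
    ∑ t ∈ Finset.range (n + 1), padicValNat p t = padicValNat p n.factorial := by
  induction n with
  | zero => simp
  | succ n ih =>
    rw [Finset.sum_range_succ, ih, Nat.factorial_succ,
      padicValNat.mul n.succ_ne_zero n.factorial_ne_zero, add_comm]

lemma slot_le_four_mul (i : ℕ) : slot i ≤ 4 * i := by
  have hsum : ∑ t ∈ Finset.range i, padicValNat 2 t + padicValNat 2 i ≤ i := by
    rw [← Finset.sum_range_succ, sum_padicValNat_eq_padicValNat_factorial]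
    exact padicValNat_factorial_le 2 i
  unfold slot
  omega

lemma sub_add_padicValNat_add_slot_le {i j : ℕ} (h : i < j) :
    j - i + padicValNat 2 i + padicValNat 2 j + slot i ≤ slot j := by
  have hsum : ∑ t ∈ Finset.range i, padicValNat 2 t + padicValNat 2 i ≤
      ∑ t ∈ Finset.range j, padicValNat 2 t := by
    rw [← Finset.sum_range_succ]
    exact Finset.sum_le_sum_of_subset (Finset.range_mono h)
  unfold slot
  omega

lemma strictMono_slot : StrictMono slot := fun i j h => by
  have := sub_add_padicValNat_add_slot_le h
  omega

lemma abs_sub_add_padicValNat_le_abs_slot_sub {i j : ℕ} (h : i ≠ j) :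
    |(i : ℝ) - j| + padicValNat 2 i + padicValNat 2 j ≤ |(slot i : ℝ) - slot j| := by
  wlog hij : i < j generalizing i j
  · have := this h.symm (h.symm.lt_of_le (not_lt.1 hij))
    rw [abs_sub_comm (i : ℝ), abs_sub_comm (slot i : ℝ)]
    linarith
  have hsep : ((j - i : ℕ) : ℝ) + padicValNat 2 i + padicValNat 2 j + slot i ≤ slot j := by
    exact_mod_cast sub_add_padicValNat_add_slot_le hij
  rw [Nat.cast_sub hij.le] at hsep
  have hle : (i : ℝ) ≤ j := by exact_mod_cast hij.le
  rw [abs_sub_comm, abs_of_nonneg (sub_nonneg.2 hle), abs_sub_comm]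
  exact le_trans (by linarith) (le_abs_self _)

lemma padicValNat_two_pow_mul_odd (e q : ℕ) : padicValNat 2 (2 ^ e * (2 * q + 1)) = e := by
  rw [padicValNat.mul (by positivity) (by omega), padicValNat.prime_pow,
    padicValNat.eq_zero_of_not_dvd (by omega), add_zero]

open scoped Classical in
lemma lowerDensity_pos_iff {A : Set ℕ} :
    0 < lowerDensity A ↔ ∃ c > 0, ∀ᶠ N : ℕ in atTop,
      c * N ≤ (((Finset.range (N + 1)).filter (· ∈ A)).card : ℝ) := by
  have hbelow : IsBoundedUnder (· ≥ ·) atTop fun N : ℕ =>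
      (((Finset.range (N + 1)).filter (· ∈ A)).card : ℝ) / N :=
    isBoundedUnder_of ⟨0, fun N => by positivity⟩
  constructor
  · intro h
    refine ⟨lowerDensity A / 2, half_pos h, ?_⟩
    filter_upwards [eventually_lt_of_lt_liminf (half_lt_self h) hbelow, eventually_gt_atTop 0]
      with N hN hN0
    exact ((lt_div_iff₀ (by exact_mod_cast hN0)).1 hN).le
  · rintro ⟨c, hc, hcA⟩
    have habove : IsBoundedUnder (· ≤ ·) atTop fun N : ℕ =>
        (((Finset.range (N + 1)).filter (· ∈ A)).card : ℝ) / N := by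
      refine isBoundedUnder_of_eventually_le (a := 2) ?_
      filter_upwards [eventually_ge_atTop 1] with N hN
      have hN' : (1 : ℝ) ≤ N := by exact_mod_cast hN
      have hcard : (((Finset.range (N + 1)).filter (· ∈ A)).card : ℝ) ≤ N + 1 := by
        exact_mod_cast (Finset.card_filter_le _ _).trans_eq (Finset.card_range _)
      rw [div_le_iff₀ (by positivity)]
      linarith
    refine hc.trans_le (le_liminf_of_le habove.isCoboundedUnder_ge ?_)
    filter_upwards [hcA, eventually_gt_atTop 0] with N hN hN0
    rwa [le_div_iff₀ (by exact_mod_cast hN0)]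

lemma lowerDensity_pos_of_eventually_imp {A B : Set ℕ} (hA : 0 < lowerDensity A)
    (h : ∀ᶠ k in atTop, k ∈ A → k ∈ B) : 0 < lowerDensity B := by
  classical
  obtain ⟨c, hc, hcA⟩ := lowerDensity_pos_iff.1 hA
  obtain ⟨M, hM⟩ := eventually_atTop.1 h
  have hlarge : ∀ᶠ N : ℕ in atTop, M ≤ c / 2 * N :=
    (tendsto_natCast_atTop_atTop.const_mul_atTop (half_pos hc)).eventually_ge_atTop _
  refine lowerDensity_pos_iff.2 ⟨c / 2, half_pos hc, ?_⟩
  filter_upwards [hcA, hlarge] with N hN hMN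
  have hsub : (Finset.range (N + 1)).filter (· ∈ A) ⊆
      Finset.range M ∪ (Finset.range (N + 1)).filter (· ∈ B) := by
    intro k hk
    rw [Finset.mem_filter] at hk
    rcases lt_or_ge k M with hkM | hkM
    · exact Finset.mem_union_left _ (Finset.mem_range.2 hkM)
    · exact Finset.mem_union_right _ (Finset.mem_filter.2 ⟨hk.1, hM k hkM hk.2⟩)
  have hcard : (((Finset.range (N + 1)).filter (· ∈ A)).card : ℝ) ≤
      M + ((Finset.range (N + 1)).filter (· ∈ B)).card := by
    have hunion := (Finset.card_le_card hsub).trans (Finset.card_union_le _ _)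
    rw [Finset.card_range] at hunion
    exact_mod_cast hunion
  linarith

lemma lowerDensity_range_pos {t : ℕ → ℕ} (ht : Function.Injective t) {M : ℕ} (hM : 0 < M)
    (hle : ∀ q, t q ≤ M * (q + 1)) : 0 < lowerDensity (range t) := by
  classical
  refine lowerDensity_pos_iff.2 ⟨1 / (2 * M), by positivity, ?_⟩
  filter_upwards [eventually_ge_atTop (2 * M)] with N hN
  have hsub : (Finset.range (N / M)).image t ⊆
      (Finset.range (N + 1)).filter (· ∈ range t) := by
    intro k hk
    obtain ⟨q, hq, rfl⟩ := Finset.mem_image.1 hk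
    have hqN : M * (q + 1) ≤ M * (N / M) := Nat.mul_le_mul_left _ (Finset.mem_range.1 hq)
    have htN : t q ≤ N := (hle q).trans (hqN.trans (Nat.mul_div_le N M))
    exact Finset.mem_filter.2 ⟨Finset.mem_range_succ_iff.2 htN, mem_range_self q⟩
  have hcard := Finset.card_le_card hsub
  rw [Finset.card_image_of_injective _ ht, Finset.card_range] at hcard
  have hdiv : N ≤ 2 * M * (N / M) := by
    have := Nat.div_add_mod N M
    have := Nat.mod_lt N hM
    rw [mul_assoc]
    omega
  rw [one_div_mul_eq_div, div_le_iff₀' (by positivity)]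
  exact_mod_cast hdiv.trans (Nat.mul_le_mul_left _ hcard)

lemma lowerDensity_image_slot_pos (e : ℕ) :
    0 < lowerDensity (slot '' {i | padicValNat 2 i = e}) := by
  have hinj : Function.Injective fun q => slot (2 ^ e * (2 * q + 1)) :=
    strictMono_slot.injective.comp fun p q hpq => by simpa using hpq
  have hle : ∀ q, slot (2 ^ e * (2 * q + 1)) ≤ 8 * 2 ^ e * (q + 1) := fun q =>
    (slot_le_four_mul _).trans (by nlinarith [pow_pos two_pos e (M₀ := ℕ)])
  refine lowerDensity_pos_of_eventually_imp (lowerDensity_range_pos hinj (by positivity) hle)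
    (.of_forall ?_)
  rintro _ ⟨q, rfl⟩
  exact mem_image_of_mem slot (padicValNat_two_pow_mul_odd e q)

/-! ### Superposition of translates -/

section SlotSum

lemma exists_tsum_one_div_one_add_abs_sub_sq_le :
    ∃ K > 0, ∀ j : ℕ, Summable (fun i : ℕ => 1 / (1 + |(i : ℝ) - j|) ^ 2) ∧
      ∑' i : ℕ, 1 / (1 + |(i : ℝ) - j|) ^ 2 ≤ K := by
  have hnat : Summable fun n : ℕ => 1 / (1 + |(n : ℝ)|) ^ 2 := by
    simpa [add_comm] using (summable_nat_add_iff 1).2 (Real.summable_one_div_nat_pow.2 one_lt_two)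
  have hint : Summable fun n : ℤ => 1 / (1 + |(n : ℝ)|) ^ 2 :=
    .of_nat_of_neg (by simpa using hnat) (by simpa using hnat)
  refine ⟨∑' n : ℤ, 1 / (1 + |(n : ℝ)|) ^ 2,
    hint.tsum_pos (fun n => by positivity) 0 (by positivity), fun j => ?_⟩
  have hinj : Function.Injective fun i : ℕ => (i : ℤ) - j :=
    (sub_left_injective (b := (j : ℤ))).comp Nat.cast_injective
  have hcomp : (fun i : ℕ => 1 / (1 + |(i : ℝ) - j|) ^ 2) =
      (fun n : ℤ => 1 / (1 + |(n : ℝ)|) ^ 2) ∘ fun i : ℕ => (i : ℤ) - j := by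
    ext i
    simp
  rw [hcomp]
  exact ⟨hint.comp_injective hinj, tsum_comp_le_tsum_of_inj hint (fun n => by positivity) hinj⟩

/-- The superposition of the translates of `ψ (padicValNat 2 i)` to the slots. Every `ψ e` is thus
placed along a set of positive lower density, and the larger `e` is, the farther it stays from all
other summands. -/
noncomputable def slotSum (ψ : ℕ → C(ℂ, ℂ)) (z : ℂ) : ℂ :=
  ∑' i, ψ (padicValNat 2 i) (z - slot i)

variable {w : ℝ → ℝ} {ψ : ℕ → C(ℂ, ℂ)}

lemma norm_apply_add_slot_sub_slot_le (hψ : ∀ e : ℕ, DecayBound w 4 e (ψ e)) {i j : ℕ}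
    (hij : i ≠ j) (z : ℂ) :
    ‖ψ (padicValNat 2 i) (z + slot j - slot i)‖ ≤
      w z.im * (1 + ‖z‖) ^ 4 / (padicValNat 2 j + 1) * (1 / (1 + |(i : ℝ) - j|) ^ 2) := by
  have hdist := abs_sub_add_padicValNat_le_abs_slot_sub hij
  rw [abs_sub_comm (slot i : ℝ)] at hdist
  have hdecay := (hψ (padicValNat 2 i)).norm_apply_add_ofReal_le z (slot j - slot i)
  push_cast [← add_sub_assoc] at hdecay
  have hweight : 0 ≤ w z.im := (hψ 1).weight_nonneg (by simp) z.im
  set d := |(slot j : ℝ) - slot i|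
  set n := |(i : ℝ) - j|
  set u := (padicValNat 2 i : ℝ)
  set v := (padicValNat 2 j : ℝ)
  have hn : 0 ≤ n := abs_nonneg _
  have hu : 0 ≤ u := Nat.cast_nonneg _
  have hv : 0 ≤ v := Nat.cast_nonneg _
  have hfactors : u * ((v + 1) * (1 + n) ^ 2) ≤ (1 + d) ^ 4 := by
    calc u * ((v + 1) * (1 + n) ^ 2) ≤ (1 + d) * ((d + 1) * (1 + d) ^ 2) := by
          gcongr <;> linarith
      _ = (1 + d) ^ 4 := by ring
  calc ‖ψ (padicValNat 2 i) (z + slot j - slot i)‖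
      ≤ w z.im * (1 + ‖z‖) ^ 4 * (u / (1 + d) ^ 4) := hdecay.trans_eq (by ring)
    _ ≤ w z.im * (1 + ‖z‖) ^ 4 * (1 / ((v + 1) * (1 + n) ^ 2)) := by
        refine mul_le_mul_of_nonneg_left ?_ (by positivity)
        rw [div_le_div_iff₀ (by positivity) (by positivity), one_mul]
        exact hfactors
    _ = w z.im * (1 + ‖z‖) ^ 4 / (v + 1) * (1 / (1 + n) ^ 2) := by
        rw [div_mul_div_comm, mul_one, mul_one_div]

lemma norm_apply_sub_slot_le (hψ : ∀ e : ℕ, DecayBound w 4 e (ψ e)) (i : ℕ) (z : ℂ) :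
    ‖ψ (padicValNat 2 i) (z - slot i)‖ ≤
      w z.im * (1 + ‖z‖) ^ 4 * (1 / (1 + |(i : ℝ) - (0 : ℕ)|) ^ 2) := by
  rcases eq_or_ne i 0 with rfl | hi
  · have hweight : 0 ≤ w z.im := (hψ 1).weight_nonneg (by simp) z.im
    have hzero : ψ 0 (z - slot 0) = 0 := by simpa using hψ 0 (z - slot 0)
    rw [padicValNat_zero_right, hzero, norm_zero]
    positivity
  · simpa [slot_zero] using norm_apply_add_slot_sub_slot_le hψ hi z

lemma differentiable_slotSum (hw : Continuous w) (hψ : ∀ e : ℕ, DecayBound w 4 e (ψ e))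
    (hdiff : ∀ e, Differentiable ℂ (ψ e)) : Differentiable ℂ (slotSum ψ) := by
  obtain ⟨_, -, hsum⟩ := exists_tsum_one_div_one_add_abs_sub_sq_le
  intro z₀
  obtain ⟨B, hB⟩ := (isCompact_closedBall z₀ 1).exists_bound_of_continuousOn
    (f := fun z : ℂ => w z.im * (1 + ‖z‖) ^ 4) (by fun_prop)
  refine (differentiableOn_tsum_of_summable_norm ((hsum 0).1.mul_left B)
    (fun i => ?_) Metric.isOpen_ball fun i z hz => ?_).differentiableAt
      (Metric.ball_mem_nhds z₀ one_pos)
  · exact ((hdiff _).comp (differentiable_id.sub_const _)).differentiableOn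
  · refine (norm_apply_sub_slot_le hψ i z).trans ?_
    gcongr
    exact (le_abs_self _).trans (hB z (Metric.ball_subset_closedBall hz))

lemma exists_norm_slotSum_add_slot_sub_le (hψ : ∀ e : ℕ, DecayBound w 4 e (ψ e)) :
    ∃ K > 0, ∀ (j : ℕ) (z : ℂ), ‖slotSum ψ (z + slot j) - ψ (padicValNat 2 j) z‖ ≤
      K * (w z.im * (1 + ‖z‖) ^ 4) / (padicValNat 2 j + 1) := by
  obtain ⟨K, hK, hsum⟩ := exists_tsum_one_div_one_add_abs_sub_sq_le
  refine ⟨K, hK, fun j z => ?_⟩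
  have hweight : 0 ≤ w z.im := (hψ 1).weight_nonneg (by simp) z.im
  have hsummable : Summable fun i => ψ (padicValNat 2 i) (z + slot j - slot i) :=
    .of_norm_bounded ((hsum 0).1.mul_left _) fun i => norm_apply_sub_slot_le hψ i _
  rw [slotSum, hsummable.tsum_eq_add_tsum_ite j, add_sub_cancel_right z, add_sub_cancel_left]
  calc _ ≤ w z.im * (1 + ‖z‖) ^ 4 / (padicValNat 2 j + 1) *
          ∑' i : ℕ, 1 / (1 + |(i : ℝ) - j|) ^ 2 := by
        refine tsum_of_norm_bounded ((hsum j).1.hasSum.mul_left _) fun i => ?_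
        split_ifs with hij
        · rw [norm_zero]
          positivity
        · exact norm_apply_add_slot_sub_slot_le hψ hij z
    _ ≤ w z.im * (1 + ‖z‖) ^ 4 / (padicValNat 2 j + 1) * K := by
        gcongr
        exact (hsum j).2
    _ = K * (w z.im * (1 + ‖z‖) ^ 4) / (padicValNat 2 j + 1) := by ring

lemma exists_growthBound_slotSum (hψ : ∀ e : ℕ, DecayBound w 4 e (ψ e)) :
    ∃ K > 0, GrowthBound w 4 K (slotSum ψ) := by
  obtain ⟨K, hK, happrox⟩ := exists_norm_slotSum_add_slot_sub_le hψ
  refine ⟨K, hK, fun z => ?_⟩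
  have hzero : ψ 0 z = 0 := by simpa using hψ 0 z
  simpa [slot_zero, hzero, mul_comm] using happrox 0 z

lemma fhcEnt_slotSum (hw : Continuous w) (hψ : ∀ e : ℕ, DecayBound w 4 e (ψ e))
    (hdiff : ∀ e, Differentiable ℂ (ψ e))
    (hcluster : ∀ g : C(ℂ, ℂ), Differentiable ℂ g → MapClusterPt g atTop ψ) :
    FHCEnt (slotSum ψ) := by
  refine ⟨differentiable_slotSum hw hψ hdiff, fun g hg R _ ε hε => ?_⟩
  obtain ⟨K, -, happrox⟩ := exists_norm_slotSum_add_slot_sub_le hψ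
  obtain ⟨B, hB⟩ := (isCompact_closedBall (0 : ℂ) R).exists_bound_of_continuousOn
    (f := fun z => K * (w z.im * (1 + ‖z‖) ^ 4)) (by fun_prop)
  have hclose : ∀ᶠ h : C(ℂ, ℂ) in 𝓝 ⟨g, hg.continuous⟩,
      ∀ z ∈ Metric.closedBall 0 R, dist (g z) (h z) < ε / 2 :=
    Metric.tendstoUniformlyOn_iff.1
      (ContinuousMap.tendsto_iff_forall_isCompact_tendstoUniformlyOn.1 tendsto_id _
        (isCompact_closedBall 0 R)) _ (half_pos hε)
  have hsmall : ∀ᶠ e : ℕ in atTop, B / (e + 1) < ε / 2 :=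
    (tendsto_const_nhds.div_atTop <| tendsto_atTop_add_const_right _ _
      tendsto_natCast_atTop_atTop).eventually_lt_const (half_pos hε)
  obtain ⟨e, hge, hBe⟩ := (((hcluster ⟨g, hg.continuous⟩ hg).frequently hclose).and_eventually
    hsmall).exists
  refine lowerDensity_pos_of_eventually_imp (lowerDensity_image_slot_pos e) (.of_forall ?_)
  rintro _ ⟨i, rfl, rfl⟩ z hz
  have hz' : z ∈ Metric.closedBall 0 R := mem_closedBall_zero_iff.2 hz
  have hsuperpose : ‖slotSum ψ (z + slot i) - ψ (padicValNat 2 i) z‖ < ε / 2 := by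
    refine ((happrox i z).trans ?_).trans_lt hBe
    gcongr
    exact (le_abs_self _).trans (hB z hz')
  have hg' : ‖ψ (padicValNat 2 i) z - g z‖ < ε / 2 := by
    simpa only [dist_eq_norm'] using hge z hz'
  linarith [norm_sub_le_norm_sub_add_norm_sub (slotSum ψ (z + slot i)) (ψ (padicValNat 2 i) z)
    (g z)]

end SlotSum

lemma exists_fhcEnt_growthBound (b : ℝ) {a : ℝ} (ha : 0 < a) :
    ∃ f, FHCEnt f ∧ ∃ K > 0, GrowthBound (tiltedWeight b a) 4 K f := by
  obtain ⟨ψ, hdiff, hψ, hcluster⟩ :=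
    exists_seq_decayBound_natCast (m := 4) fun y => (tiltedWeight_pos b a y).le
  exact ⟨slotSum ψ, fhcEnt_slotSum (continuous_tiltedWeight b a) hψ hdiff fun g hg =>
    hcluster g (mem_closure_decayingFunctions b ha 4 hg), exists_growthBound_slotSum hψ⟩

lemma FHCEnt.add_of_tendstoUniformlyOn_translates {f φ : ℂ → ℂ} (hf : FHCEnt f)
    (hφ : Differentiable ℂ φ)
    (hlim : ∀ R, TendstoUniformlyOn (fun (k : ℕ) z => φ (z + k)) 0 atTop
      (Metric.closedBall 0 R)) : FHCEnt (f + φ) := by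
  refine ⟨hf.1.add hφ, fun g hg R hR ε hε => ?_⟩
  refine lowerDensity_pos_of_eventually_imp (hf.2 g hg R hR _ (half_pos hε)) ?_
  filter_upwards [Metric.tendstoUniformlyOn_iff.1 (hlim R) _ (half_pos hε)] with k hk hfk z hz
  have hsmall : ‖φ (z + k)‖ < ε / 2 := by simpa using hk z (mem_closedBall_zero_iff.2 hz)
  calc ‖(f + φ) (z + k) - g z‖ = ‖(f (z + k) - g z) + φ (z + k)‖ := by
        rw [Pi.add_apply, sub_add_eq_add_sub]
    _ ≤ ‖f (z + k) - g z‖ + ‖φ (z + k)‖ := norm_add_le _ _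
    _ < ε := by linarith [hfk z hz]

/-! ### Indicators -/

lemma eventually_mul_one_add_pow_le_exp (K : ℝ) (m : ℕ) {ε : ℝ} (hε : 0 < ε) :
    ∀ᶠ r in atTop, K * (1 + r) ^ m ≤ Real.exp (ε * r) := by
  have hlittle := ((isLittleO_pow_exp_pos_mul_atTop m hε).const_mul_left K).comp_tendsto
    (tendsto_atTop_add_const_left atTop 1 tendsto_id)
  filter_upwards [hlittle.def (Real.exp_pos (-ε))] with r hr
  simp only [Function.comp_apply, id, Real.norm_eq_abs, Real.abs_exp, ← Real.exp_add] at hr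
  exact (le_abs_self _).trans (hr.trans_eq (by ring_nf))

lemma im_ofReal_mul_exp_mul_I (r θ : ℝ) :
    ((r : ℂ) * Complex.exp (θ * I)).im = r * Real.sin θ := by
  rw [im_ofReal_mul, exp_ofReal_mul_I_im]

lemma norm_ofReal_mul_exp_mul_I {r : ℝ} (hr : 0 ≤ r) (θ : ℝ) :
    ‖(r : ℂ) * Complex.exp (θ * I)‖ = r := by
  rw [norm_mul, norm_exp_ofReal_mul_I, mul_one, norm_real, Real.norm_of_nonneg hr]

-- A negative bound `c` requires control from below: the real `limsup` is `0` along functions that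
-- are not eventually bounded below, and `Real.log 0 = 0`.
lemma indicatorFn_le {f : ℂ → ℂ} {θ c : ℝ}
    (hup : ∀ ε > 0, ∀ᶠ r : ℝ in atTop,
      ‖f (r * Complex.exp (θ * I))‖ ≤ Real.exp ((c + ε) * r))
    (hlow : 0 ≤ c ∨ ∃ d, ∀ᶠ r : ℝ in atTop,
      Real.exp (d * r) ≤ ‖f (r * Complex.exp (θ * I))‖) :
    indicatorFn f θ ≤ c := by
  set u : ℝ → ℝ := fun r => Real.log ‖f (r * Complex.exp (θ * I))‖ / r
  have hu : ∀ ε > 0, ∀ᶠ r in atTop, u r ≤ c + ε := by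
    intro ε hε
    have hzero : ∀ᶠ r : ℝ in atTop, 0 ≤ c ∨ 0 < ‖f (r * Complex.exp (θ * I))‖ := by
      rcases hlow with hc | ⟨d, hd⟩
      · exact .of_forall fun r => .inl hc
      · exact hd.mono fun r hr => .inr ((Real.exp_pos _).trans_le hr)
    filter_upwards [hup ε hε, hzero, eventually_gt_atTop 0] with r hr hzr hr0
    rw [div_le_iff₀ hr0]
    rcases (norm_nonneg (f (r * Complex.exp (θ * I)))).eq_or_lt with h0 | hpos
    · have hc : 0 ≤ c := hzr.resolve_right h0.not_lt
      rw [← h0, Real.log_zero]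
      positivity
    · exact (Real.log_le_iff_le_exp hpos).2 hr
  rw [indicatorFn, limsup_eq]
  by_cases hbdd : BddBelow {x | ∀ᶠ r in atTop, u r ≤ x}
  · exact le_of_forall_pos_le_add fun ε hε => csInf_le hbdd (hu ε hε)
  · rcases hlow with hc | ⟨d, hd⟩
    · rwa [Real.sInf_of_not_bddBelow hbdd]
    · refine absurd ⟨d, fun x hx => ?_⟩ hbdd
      obtain ⟨r, hxr, hdr, hr0⟩ := (hx.and (hd.and (eventually_gt_atTop 0))).exists
      exact ((le_div_iff₀ hr0).2 ((Real.le_log_iff_exp_le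
        ((Real.exp_pos _).trans_le hdr)).2 hdr)).trans hxr

namespace GrowthBound

variable {b a K : ℝ} {m : ℕ} {f : ℂ → ℂ}

lemma expType (h : GrowthBound (tiltedWeight b a) m K f) (hf : Differentiable ℂ f) :
    ExpType f := by
  have hK : 0 ≤ K := by simpa [tiltedWeight] using (norm_nonneg _).trans (h 0)
  refine ⟨hf, K, m + (|b| + |a|), fun z => (h z).trans ?_⟩
  have hpow : (1 + ‖z‖) ^ m ≤ Real.exp (m * ‖z‖) := by
    rw [Real.exp_nat_mul, add_comm]
    exact pow_le_pow_left₀ (by positivity) (Real.add_one_le_exp _) _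
  have hweight : tiltedWeight b a z.im ≤ Real.exp ((|b| + |a|) * ‖z‖) := by
    refine Real.exp_le_exp.2 ?_
    calc -b * z.im + a * |z.im| ≤ |b| * |z.im| + |a| * |z.im| := by
          refine add_le_add ?_ ?_
          · rw [← abs_mul, neg_mul]
            exact neg_le_abs _
          · gcongr
            exact le_abs_self a
      _ ≤ (|b| + |a|) * ‖z‖ := by
          rw [← add_mul]
          gcongr
          exact abs_im_le_norm z
  rw [add_mul, Real.exp_add]
  have := (tiltedWeight_pos b a z.im).le
  gcongr

lemma eventually_norm_le_exp (h : GrowthBound (tiltedWeight b a) m K f) (θ : ℝ) {ε : ℝ}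
    (hε : 0 < ε) : ∀ᶠ r : ℝ in atTop, ‖f (r * Complex.exp (θ * I))‖ ≤
      Real.exp ((-b * Real.sin θ + a * |Real.sin θ| + ε) * r) := by
  filter_upwards [eventually_mul_one_add_pow_le_exp K m hε, eventually_ge_atTop 0] with r hr hr0
  have hweight : tiltedWeight b a (r * Real.sin θ) =
      Real.exp ((-b * Real.sin θ + a * |Real.sin θ|) * r) := by
    rw [tiltedWeight, abs_mul, abs_of_nonneg hr0]
    ring_nf
  have hf := h (r * Complex.exp (θ * I))
  rw [im_ofReal_mul_exp_mul_I, norm_ofReal_mul_exp_mul_I hr0, hweight, ← mul_assoc] at hf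
  refine hf.trans ?_
  rw [add_mul _ ε, Real.exp_add, mul_comm]
  gcongr

end GrowthBound

/-- The entire function `exp (i b z) sin (a z) / (a z)`, whose indicator is exactly
`-b sin θ + a |sin θ|` and whose translates along the real axis tend to `0`. -/
noncomputable def tiltedSinc (b a : ℝ) (z : ℂ) : ℂ :=
  Complex.exp (I * b * z) * csinc (a * z)

lemma differentiable_tiltedSinc (b a : ℝ) : Differentiable ℂ (tiltedSinc b a) := by
  unfold tiltedSinc
  fun_prop

lemma exists_decayBound_tiltedSinc (b : ℝ) {a : ℝ} (ha : 0 < a) :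
    ∃ C, DecayBound (tiltedWeight b a) 1 C (tiltedSinc b a) := by
  obtain ⟨C, -, hC⟩ := exists_decayBound_csinc ha
  have htilted := hC.cexp_mul b
  rw [zero_add] at htilted
  exact ⟨C, htilted⟩

lemma eventually_exp_le_norm_tiltedSinc (b : ℝ) {a θ ε : ℝ} (ha : 0 < a) (hθ : Real.sin θ ≠ 0)
    (hε : 0 < ε) : ∀ᶠ r : ℝ in atTop,
      Real.exp ((-b * Real.sin θ + a * |Real.sin θ| - ε) * r) ≤
        ‖tiltedSinc b a (r * Complex.exp (θ * I))‖ := by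
  have hrate : 0 < a * |Real.sin θ| := mul_pos ha (abs_pos.2 hθ)
  filter_upwards [eventually_mul_one_add_pow_le_exp (4 * a) 1 hε,
    eventually_mul_one_add_pow_le_exp 2 0 hrate, eventually_gt_atTop 0] with r hpoly htwo hr
  set z : ℂ := r * Complex.exp (θ * I)
  have him : z.im = r * Real.sin θ := im_ofReal_mul_exp_mul_I r θ
  have hexp : ‖Complex.exp (I * b * z)‖ = Real.exp (-b * Real.sin θ * r) := by
    simp only [norm_exp, mul_re, I_re, I_im, mul_im, ofReal_re, ofReal_im, him]
    ring_nf
  have hsin : (Real.exp (a * |Real.sin θ| * r) - 1) / 2 ≤ a * r * ‖csinc (a * z)‖ := by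
    have hlow := exp_abs_im_sub_one_div_two_le_norm_sin (a * z)
    rw [← mul_csinc, norm_mul, norm_mul, norm_real, Real.norm_of_nonneg ha.le,
      norm_ofReal_mul_exp_mul_I hr.le, im_ofReal_mul, him, abs_mul, abs_mul, abs_of_pos ha,
      abs_of_pos hr, mul_comm r, ← mul_assoc] at hlow
    exact hlow
  have hcsinc : Real.exp ((a * |Real.sin θ| - ε) * r) ≤ ‖csinc (a * z)‖ := by
    refine le_of_mul_le_mul_left (le_trans ?_ hsin) (mul_pos ha hr)
    have hsplit : Real.exp (a * |Real.sin θ| * r) =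
        Real.exp ((a * |Real.sin θ| - ε) * r) * Real.exp (ε * r) := by
      rw [← Real.exp_add]
      ring_nf
    have hmul : Real.exp ((a * |Real.sin θ| - ε) * r) * (4 * a * r) ≤
        Real.exp (a * |Real.sin θ| * r) := by
      rw [hsplit]
      gcongr
      linarith
    linarith
  rw [tiltedSinc, norm_mul, hexp, add_sub_assoc, add_mul, Real.exp_add]
  gcongr

lemma eventually_exp_le_norm_add {E : Type*} [SeminormedAddCommGroup E] {u v : ℝ → E} {c d : ℝ}
    (hcd : c < d) (hu : ∀ᶠ r in atTop, ‖u r‖ ≤ Real.exp (c * r))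
    (hv : ∀ᶠ r in atTop, Real.exp (d * r) ≤ ‖v r‖) :
    ∀ᶠ r in atTop, Real.exp (c * r) ≤ ‖u r + v r‖ := by
  filter_upwards [hu, hv, eventually_mul_one_add_pow_le_exp 2 0 (sub_pos.2 hcd)]
    with r hur hvr htwo
  have hdouble : 2 * Real.exp (c * r) ≤ Real.exp (d * r) := by
    calc 2 * Real.exp (c * r) ≤ Real.exp ((d - c) * r) * Real.exp (c * r) := by
          gcongr
          linarith
      _ = Real.exp (d * r) := by rw [← Real.exp_add]; ring_nf
  have htriangle := norm_sub_le (u r + v r) (u r)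
  rw [add_sub_cancel_left] at htriangle
  linarith

lemma GrowthBound.exists_exp_le_norm_add_tiltedSinc {b a a' K : ℝ} {m : ℕ} {f : ℂ → ℂ}
    (h : GrowthBound (tiltedWeight b a') m K f) (ha : 0 < a) (haa' : a' < a) {θ : ℝ}
    (hθ : Real.sin θ ≠ 0) : ∃ d, ∀ᶠ r : ℝ in atTop,
      Real.exp (d * r) ≤ ‖(f + tiltedSinc b a) (r * Complex.exp (θ * I))‖ := by
  have hgap : 0 < (a - a') * |Real.sin θ| / 3 := by
    have := sub_pos.2 haa'
    positivity
  exact ⟨_, eventually_exp_le_norm_add (by linarith) (h.eventually_norm_le_exp θ hgap)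
    (eventually_exp_le_norm_tiltedSinc b ha hθ hgap)⟩

/-- **Remark 2.** For `a > 0`, `b ∈ ℝ` there is a frequently Birkhoff-universal entire
function `f` of exponential type with `h_f(θ) ≤ −b sin θ + a |sin θ|` on `[−π, π]`. -/
theorem stmt8 (a b : ℝ) (ha : 0 < a) :
    ∃ f : ℂ → ℂ, ExpType f ∧ FHCEnt f ∧
      ∀ θ ∈ Set.Icc (-Real.pi) Real.pi,
        indicatorFn f θ ≤ -b * Real.sin θ + a * |Real.sin θ| := by
  obtain ⟨F, hF, K, hK, hgrowthF⟩ := exists_fhcEnt_growthBound b (half_pos ha)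
  obtain ⟨C, hdecay⟩ := exists_decayBound_tiltedSinc b ha
  have hdiff := differentiable_tiltedSinc b a
  have hgrowth : GrowthBound (tiltedWeight b a) 4 (K + C) (F + tiltedSinc b a) :=
    (hgrowthF.mono_weight hK.le (tiltedWeight_mono b (half_le_self ha.le))).add
      (hdecay.growthBound 4)
  refine ⟨F + tiltedSinc b a, hgrowth.expType (hF.1.add hdiff), ?_, fun θ _ => ?_⟩
  · exact hF.add_of_tendstoUniformlyOn_translates hdiff
      (hdecay.tendstoUniformlyOn_translates one_ne_zero (continuous_tiltedWeight b a))
  · refine indicatorFn_le (fun ε hε => hgrowth.eventually_norm_le_exp θ hε) ?_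
    rcases eq_or_ne (Real.sin θ) 0 with hθ | hθ
    · exact .inl (by simp [hθ])
    · exact .inr (hgrowthF.exists_exp_le_norm_add_tiltedSinc ha (half_lt_self ha) hθ)
end
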